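/- Let Q be a hereditary graph class and W a graphon. Then W ∈ Q̂ if and only if p(F;W) = 0 for every m ≥ 1 and every simple graph F on vertex set {1,…,m} with F ∉ Q_m. -/

import Mathlib

open MeasureTheory Set Filter

noncomputable section

/-- A graphon: a symmetric measurable function `ℝ → ℝ → ℝ` with values in `[0,1]`
(only its values on `[0,1]²` matter). -/
def IsGraphon (W : ℝ → ℝ → ℝ) : Prop :=
  (∀ x y, W x y = W y x) ∧ Measurable (Function.uncurry W) ∧
    ∀ x y, W x y ∈ Set.Icc (0 : ℝ) 1

/-- The cut norm `‖U‖_□`, the supremum over measurable `S, T ⊆ [0,1]` of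
`|∫_{S×T} U|`. -/
def cutNorm (U : ℝ → ℝ → ℝ) : ℝ :=
  sSup { r : ℝ | ∃ S T : Set ℝ, MeasurableSet S ∧ MeasurableSet T ∧
    S ⊆ Set.Icc 0 1 ∧ T ⊆ Set.Icc 0 1 ∧
    r = |∫ p in S ×ˢ T, U p.1 p.2| }

/-- `d_□(W₁, W₂) = ‖W₁ - W₂‖_□`. -/
def dCut (W₁ W₂ : ℝ → ℝ → ℝ) : ℝ := cutNorm (fun x y => W₁ x y - W₂ x y)

/-- A Lebesgue-measure-preserving map `[0,1] → [0,1]`. -/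
def IsMPSelf (σ : ℝ → ℝ) : Prop :=
  MeasureTheory.MeasurePreserving σ
      (MeasureTheory.volume.restrict (Set.Icc (0:ℝ) 1))
      (MeasureTheory.volume.restrict (Set.Icc (0:ℝ) 1)) ∧
    Set.MapsTo σ (Set.Icc (0:ℝ) 1) (Set.Icc (0:ℝ) 1)

/-- The cut distance `δ_□(W₁, W₂)`. -/
def deltaCut (W₁ W₂ : ℝ → ℝ → ℝ) : ℝ :=
  sInf { r : ℝ | ∃ σ₁ σ₂ : ℝ → ℝ, IsMPSelf σ₁ ∧ IsMPSelf σ₂ ∧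
    r = cutNorm (fun x y => W₁ (σ₁ x) (σ₁ y) - W₂ (σ₂ x) (σ₂ y)) }

/-- The binary entropy function `h` (base-2 logarithm; `logb 2 0 = 0` by convention,
so `h 0 = h 1 = 0`). -/
def binEnt (x : ℝ) : ℝ := -x * Real.logb 2 x - (1 - x) * Real.logb 2 (1 - x)

/-- `h̃ x = h (min x (1/2))`. -/
def htilde (x : ℝ) : ℝ := binEnt (min x (1/2))

/-- The entropy `Ent(W) = ∫₀¹∫₀¹ h(W(x,y)) dx dy` of a graphon. -/
def graphonEnt (W : ℝ → ℝ → ℝ) : ℝ :=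
  ∫ x in Set.Icc (0:ℝ) 1, ∫ y in Set.Icc (0:ℝ) 1, binEnt (W x y)

open Classical in
/-- The graphon `W_G` of a simple graph `G` on `{1, …, n}` (vertices as `Fin n`,
vertex `i : Fin n` representing `i+1`): `W_G x y = 1` iff `⌈nx⌉⌈ny⌉ ∈ E(G)`. -/
def graphonOfGraph {n : ℕ} (G : SimpleGraph (Fin n)) : ℝ → ℝ → ℝ := fun x y =>
  if ∃ i j : Fin n, G.Adj i j ∧ ⌈(n : ℝ) * x⌉ = ((i : ℕ) : ℤ) + 1 ∧
      ⌈(n : ℝ) * y⌉ = ((j : ℕ) : ℤ) + 1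
  then 1 else 0

/-- A labelled graph class: a set of graphs on `{1,…,n}` for each `n`. -/
abbrev GraphClass := ∀ n : ℕ, Set (SimpleGraph (Fin n))

/-- A graph class is closed under relabelling by permutations. -/
def IsGraphClass (Q : GraphClass) : Prop :=
  ∀ (n : ℕ) (π : Equiv.Perm (Fin n)) (G : SimpleGraph (Fin n)),
    G ∈ Q n → G.comap ⇑π ∈ Q n

/-- A hereditary graph class: a graph class closed under taking induced subgraphs
(relabelled by the order-preserving bijection). -/
def IsHereditary (Q : GraphClass) : Prop :=
  IsGraphClass Q ∧
    ∀ (m n : ℕ) (f : Fin m → Fin n), StrictMono f →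
      ∀ G ∈ Q n, G.comap f ∈ Q m

/-- `Q̂`: the set of graphons which are limits (in cut distance) of sequences of graphs in
the class `Q` whose orders tend to infinity. -/
def limitSet (Q : GraphClass) : Set (ℝ → ℝ → ℝ) :=
  { W | IsGraphon W ∧
    ∃ (nk : ℕ → ℕ) (Gk : ∀ k, SimpleGraph (Fin (nk k))),
      (∀ k, Gk k ∈ Q (nk k)) ∧ Filter.Tendsto nk Filter.atTop Filter.atTop ∧
      Filter.Tendsto (fun k => deltaCut (graphonOfGraph (Gk k)) W) Filter.atTop (nhds 0) }

/-- `C(n,2) = n(n-1)/2` as a real number. -/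
def choose2 (n : ℕ) : ℝ := (n : ℝ) * ((n : ℝ) - 1) / 2

open Classical in
/-- The step function `E[W | P]` obtained by averaging `W` over the products of the
parts of the partition `P` of `[0,1]`. -/
def condExpPart {k : ℕ} (P : Fin k → Set ℝ) (W : ℝ → ℝ → ℝ) : ℝ → ℝ → ℝ := fun x y =>
  ∑ i : Fin k, ∑ j : Fin k,
    if x ∈ P i ∧ y ∈ P j then ⨍ p in (P i) ×ˢ (P j), W p.1 p.2 else 0

/-- `W̄_n`: the step function of `W` for the partition of `[0,1]` into `n` consecutive
intervals of length `1/n`. -/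
def barStep (n : ℕ) (W : ℝ → ℝ → ℝ) : ℝ → ℝ → ℝ :=
  condExpPart (fun i : Fin n => Set.Ioc (((i : ℕ) : ℝ)/n) ((((i : ℕ) : ℝ) + 1)/n)) W

/-- `N̂_□(n, δ; W)`: the number of graphs `G` on `{1,…,n}` with `d_□(W_G, W) ≤ δ`. -/
def NhatCut (n : ℕ) (δ : ℝ) (W : ℝ → ℝ → ℝ) : ℕ :=
  Nat.card {G : SimpleGraph (Fin n) // dCut (graphonOfGraph G) W ≤ δ}

/-- `N_□(n, δ; W)`: the number of graphs `G` on `{1,…,n}` with `δ_□(W_G, W) ≤ δ`. -/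
def NCut (n : ℕ) (δ : ℝ) (W : ℝ → ℝ → ℝ) : ℕ :=
  Nat.card {G : SimpleGraph (Fin n) // deltaCut (graphonOfGraph G) W ≤ δ}

open Classical in
/-- The induced density `p(F; W)` of a graph `F` on `{1,…,k}` in a graphon `W`. -/
def inducedDensity {k : ℕ} (F : SimpleGraph (Fin k)) (W : ℝ → ℝ → ℝ) : ℝ :=
  ∫ x : Fin k → ℝ in Set.univ.pi (fun _ : Fin k => Set.Icc (0:ℝ) 1),
    ∏ i : Fin k, ∏ j : Fin k,
      if i < j then (if F.Adj i j then W (x i) (x j) else 1 - W (x i) (x j)) else 1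

open Classical in
/-- The randomness support graphon `1_{rand(W)}` of `W`. -/
def randIndicator (W : ℝ → ℝ → ℝ) : ℝ → ℝ → ℝ := fun x y =>
  if 0 < W x y ∧ W x y < 1 then 1 else 0

/-- A kernel `U` is `K_r`-free if `∏_{i<j} U(x_i, x_j) = 0` for a.e. `x ∈ [0,1]^r`. -/
def KFree (r : ℕ) (U : ℝ → ℝ → ℝ) : Prop :=
  ∀ᵐ x ∂(MeasureTheory.volume.restrict (Set.univ.pi fun _ : Fin r => Set.Icc (0:ℝ) 1)),
    (∏ i : Fin r, ∏ j : Fin r, if i < j then U (x i) (x j) else 1) = 0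

open Classical in
/-- The graphon `W^{(r,s)}`: equal to `1/2` off the diagonal blocks, `1` on the first `s`
diagonal blocks `I_i × I_i`, and `0` on the remaining diagonal blocks. -/
def Wrs (r s : ℕ) : ℝ → ℝ → ℝ := fun x y =>
  if ∃ i j : Fin r, i ≠ j ∧ x ∈ Set.Ioc (((i:ℕ):ℝ)/r) ((((i:ℕ):ℝ)+1)/r) ∧
      y ∈ Set.Ioc (((j:ℕ):ℝ)/r) ((((j:ℕ):ℝ)+1)/r)
  then 1/2
  else if ∃ i : Fin r, (i:ℕ) < s ∧ x ∈ Set.Ioc (((i:ℕ):ℝ)/r) ((((i:ℕ):ℝ)+1)/r) ∧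
      y ∈ Set.Ioc (((i:ℕ):ℝ)/r) ((((i:ℕ):ℝ)+1)/r)
  then 1 else 0

/-- `E_r = ⋃_{i ≠ j} I_i × I_j` where `I_i`, `i = 1, …, r`, are the consecutive
intervals of length `1/r` in `[0,1]`. -/
def Er (r : ℕ) : Set (ℝ × ℝ) :=
  ⋃ (i : Fin r) (j : Fin r) (_ : i ≠ j),
    (Set.Ioc (((i:ℕ):ℝ)/r) ((((i:ℕ):ℝ)+1)/r)) ×ˢ (Set.Ioc (((j:ℕ):ℝ)/r) ((((j:ℕ):ℝ)+1)/r))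

/-- `R_r`: the set of graphons equal to `1/2` on `E_r` and `{0,1}`-valued elsewhere
on `[0,1]²`. -/
def Rset (r : ℕ) : Set (ℝ → ℝ → ℝ) :=
  { W | IsGraphon W ∧ (∀ p ∈ Er r, W p.1 p.2 = 1/2) ∧
      ∀ p ∈ ((Set.Icc (0:ℝ) 1) ×ˢ (Set.Icc (0:ℝ) 1)) \ Er r,
        W p.1 p.2 = 0 ∨ W p.1 p.2 = 1 }

/-- A graphon is random-free if it is `{0,1}`-valued a.e. on `[0,1]²`. -/
def IsRandomFree (W : ℝ → ℝ → ℝ) : Prop :=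
  ∀ᵐ p ∂(MeasureTheory.volume.restrict ((Set.Icc (0:ℝ) 1) ×ˢ (Set.Icc (0:ℝ) 1))),
    W (Prod.fst p) (Prod.snd p) = 0 ∨ W (Prod.fst p) (Prod.snd p) = 1

/-!
If `F` is not in the hereditary class, then no injective sample of a graph of the class induces `F`,
so the density of `F` in a class graph on `n` vertices is at most the probability `O(1 / n)` that a
sample falls twice in the same cell; densities being continuous for the cut distance (counting
lemma), the density of `F` in a limit vanishes.

Conversely, let all densities of non-members vanish in `W`, and sample one point in each of the `n`
cells of `[0, 1]`. Almost surely, every graph of positive probability in the `W`-random graph on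
these points is in the class. Approximating `W` by a continuous function shows that for some sample
the matrix of edge probabilities is close to `W` in `L¹`. It remains to find a graph of positive
probability close to this matrix in cut norm. The fourth power of the cut norm is bounded by a sum
over four-cycles, in which the terms with four distinct edges are affine in the indicator of each
edge; so the edges can be rounded one at a time without increasing the sum of these terms, which
vanishes at the start, and the other `O(n³)` terms are negligible.
-/
/-! ### Rounding on the cube -/

/-- A function on `ι → ℝ` is multiaffine if it is affine in each coordinate separately; such a
function attains its minimum over a cube at a vertex. -/
def IsMultiaffine {ι : Type*} [DecidableEq ι] (f : (ι → ℝ) → ℝ) : Prop :=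
  ∀ g e, ∃ a b : ℝ, ∀ t, f (Function.update g e t) = a + b * t

namespace IsMultiaffine

variable {ι κ : Type*} [DecidableEq ι]

lemma const (c : ℝ) : IsMultiaffine fun _ : ι → ℝ => c :=
  fun _ _ => ⟨c, 0, by simp⟩

lemma sum [Fintype κ] {f : κ → (ι → ℝ) → ℝ} (hf : ∀ k, IsMultiaffine (f k)) :
    IsMultiaffine fun g => ∑ k, f k g := by
  intro g e
  choose a b hab using fun k => hf k g e
  exact ⟨∑ k, a k, ∑ k, b k,
    fun t => by simp only [hab, Finset.sum_add_distrib, Finset.sum_mul]⟩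

lemma prod_sub (h : ι → ℝ) (s : Finset ι) : IsMultiaffine fun g => ∏ e ∈ s, (g e - h e) := by
  intro g e
  have update_eq : ∀ t, ∏ e' ∈ s.erase e, (Function.update g e t e' - h e') =
      ∏ e' ∈ s.erase e, (g e' - h e') := fun t =>
    Finset.prod_congr rfl fun e' he' => by rw [Function.update_of_ne (Finset.ne_of_mem_erase he')]
  by_cases he : e ∈ s
  · refine ⟨-h e * ∏ e' ∈ s.erase e, (g e' - h e'), ∏ e' ∈ s.erase e, (g e' - h e'), fun t => ?_⟩
    beta_reduce
    rw [← Finset.mul_prod_erase s _ he, update_eq, Function.update_self]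
    ring
  · rw [Finset.erase_eq_of_notMem he] at update_eq
    exact ⟨_, 0, fun t => (update_eq t).trans (by rw [zero_mul, add_zero])⟩

end IsMultiaffine

lemma exists_rounding_mul_le {y : ℝ} (hy : y ∈ Icc (0 : ℝ) 1) (b : ℝ) :
    ∃ t, (t = 0 ∧ y < 1 ∨ t = 1 ∧ 0 < y) ∧ b * t ≤ b * y := by
  rcases eq_or_lt_of_le hy.1 with rfl | hy0
  · exact ⟨0, Or.inl ⟨rfl, one_pos⟩, le_rfl⟩
  rcases eq_or_lt_of_le hy.2 with rfl | hy1
  · exact ⟨1, Or.inr ⟨rfl, one_pos⟩, le_rfl⟩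
  rcases le_total 0 b with hb | hb
  · exact ⟨0, Or.inl ⟨rfl, hy1⟩, mul_le_mul_of_nonneg_left hy.1 hb⟩
  · exact ⟨1, Or.inr ⟨rfl, hy0⟩, mul_le_mul_of_nonpos_left hy.2 hb⟩

lemma IsMultiaffine.exists_rounding_le {ι : Type*} [Finite ι] [DecidableEq ι]
    {f : (ι → ℝ) → ℝ} (hf : IsMultiaffine f) {h : ι → ℝ} (hh : ∀ e, h e ∈ Icc (0 : ℝ) 1) :
    ∃ g, (∀ e, g e = 0 ∧ h e < 1 ∨ g e = 1 ∧ 0 < h e) ∧ f g ≤ f h := by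
  suffices partial_rounding : ∀ D : Finset ι, ∃ g,
      (∀ e ∈ D, g e = 0 ∧ h e < 1 ∨ g e = 1 ∧ 0 < h e) ∧ (∀ e ∉ D, g e = h e) ∧ f g ≤ f h by
    cases nonempty_fintype ι
    obtain ⟨g, hg, -, hfg⟩ := partial_rounding Finset.univ
    exact ⟨g, fun e => hg e (Finset.mem_univ e), hfg⟩
  intro D
  induction D using Finset.induction_on with
  | empty => exact ⟨h, by simp⟩
  | insert e D he ih =>
    obtain ⟨g, hgD, hgh, hfg⟩ := ih
    obtain ⟨a, b, hab⟩ := hf g e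
    obtain ⟨t, ht, hbt⟩ := exists_rounding_mul_le (hh e) b
    refine ⟨Function.update g e t, fun e' he' => ?_, fun e' he' => ?_, ?_⟩
    · rcases Finset.mem_insert.1 he' with rfl | heD
      · rwa [Function.update_self]
      · rw [Function.update_of_ne (ne_of_mem_of_not_mem heD he)]
        exact hgD e' heD
    · rw [Finset.mem_insert, not_or] at he'
      rw [Function.update_of_ne he'.1, hgh e' he'.2]
    · calc f (Function.update g e t) = a + b * t := hab t
        _ ≤ a + b * g e := by rw [hgh e he]; gcongr
        _ = f g := by rw [← hab, Function.update_eq_self]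
        _ ≤ f h := hfg

/-! ### Four-cycle sums -/

/-- The weighted number of homomorphic images of the four-cycle `K_{2,2}` in the bipartite
weighted graph `D`. It controls the cut norm of the corresponding step function. -/
def fourCycleSum {ι κ : Type*} [Fintype ι] [Fintype κ] (D : ι → κ → ℝ) : ℝ :=
  ∑ i, ∑ i', ∑ j, ∑ j', D i j * D i j' * (D i' j * D i' j')

section FourCycleSum

variable {ι κ : Type*} [Fintype ι] [Fintype κ]

lemma fourCycleSum_eq_sum_sq (D : ι → κ → ℝ) :
    fourCycleSum D = ∑ p : κ × κ, (∑ i, D i p.1 * D i p.2) ^ 2 := by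
  simp only [fourCycleSum, sq, Finset.sum_mul_sum]
  rw [Finset.sum_comm (s := (Finset.univ : Finset (κ × κ)))]
  refine Finset.sum_congr rfl fun i _ => ?_
  rw [Finset.sum_comm (s := (Finset.univ : Finset (κ × κ)))]
  refine Finset.sum_congr rfl fun i' _ => ?_
  rw [Fintype.sum_prod_type]

lemma fourCycleSum_nonneg (D : ι → κ → ℝ) : 0 ≤ fourCycleSum D := by
  rw [fourCycleSum_eq_sum_sq]
  exact Finset.sum_nonneg fun _ _ => sq_nonneg _

lemma sum_sq_sum_mul_eq (b : κ → ℝ) (D : ι → κ → ℝ) :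
    ∑ i, (∑ j, b j * D i j) ^ 2 =
      ∑ p : κ × κ, b p.1 * b p.2 * ∑ i, D i p.1 * D i p.2 := by
  simp only [sq, Finset.sum_mul_sum]
  simp only [Fintype.sum_prod_type, Finset.mul_sum]
  rw [Finset.sum_comm]
  refine Finset.sum_congr rfl fun j _ => ?_
  rw [Finset.sum_comm]
  exact Finset.sum_congr rfl fun j' _ => Finset.sum_congr rfl fun i _ => by ring

lemma sq_sum_sq_sum_mul_le (b : κ → ℝ) (D : ι → κ → ℝ) :
    (∑ i, (∑ j, b j * D i j) ^ 2) ^ 2 ≤ (∑ j, b j ^ 2) ^ 2 * fourCycleSum D := by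
  have sum_sq_mul : ∑ p : κ × κ, (b p.1 * b p.2) ^ 2 = (∑ j, b j ^ 2) ^ 2 := by
    simp only [Fintype.sum_prod_type, mul_pow, sq (∑ j, b j ^ 2), Finset.sum_mul_sum]
  rw [sum_sq_sum_mul_eq, fourCycleSum_eq_sum_sq, ← sum_sq_mul]
  exact Finset.sum_mul_sq_le_sq_mul_sq _ _ _

lemma sum_mul_mul_pow_four_le (a : ι → ℝ) (b : κ → ℝ) (D : ι → κ → ℝ) :
    (∑ i, ∑ j, a i * b j * D i j) ^ 4 ≤
      (∑ i, a i ^ 2) ^ 2 * (∑ j, b j ^ 2) ^ 2 * fourCycleSum D := by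
  have cauchy_schwarz : (∑ i, ∑ j, a i * b j * D i j) ^ 2 ≤
      (∑ i, a i ^ 2) * ∑ i, (∑ j, b j * D i j) ^ 2 := by
    simp only [mul_assoc, ← Finset.mul_sum]
    exact Finset.sum_mul_sq_le_sq_mul_sq _ _ _
  calc (∑ i, ∑ j, a i * b j * D i j) ^ 4 = ((∑ i, ∑ j, a i * b j * D i j) ^ 2) ^ 2 := by ring
    _ ≤ ((∑ i, a i ^ 2) * ∑ i, (∑ j, b j * D i j) ^ 2) ^ 2 := by gcongr
    _ = (∑ i, a i ^ 2) ^ 2 * (∑ i, (∑ j, b j * D i j) ^ 2) ^ 2 := mul_pow _ _ 2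
    _ ≤ (∑ i, a i ^ 2) ^ 2 * ((∑ j, b j ^ 2) ^ 2 * fourCycleSum D) := by
        gcongr
        exact sq_sum_sq_sum_mul_le b D
    _ = _ := (mul_assoc _ _ _).symm

end FourCycleSum

section ProperFourCycleSum

variable {V : Type*} [DecidableEq V]

lemma fourCycleSum_term_le {D : V → V → ℝ} (abs_le_one : ∀ i j, |D i j| ≤ 1)
    (diag : ∀ i, D i i = 0) (i i' j j' : V) :
    D i j * D i j' * (D i' j * D i' j') ≤
      (if [i, i', j, j'].Nodup then D i j * D i j' * (D i' j * D i' j') else 0) +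
        ((if i = i' then 1 else 0) + (if j = j' then 1 else 0)) := by
  have term_le_one : D i j * D i j' * (D i' j * D i' j') ≤ 1 := by
    refine (le_abs_self _).trans ?_
    simp only [abs_mul]
    exact mul_le_one₀ (mul_le_one₀ (abs_le_one i j) (abs_nonneg _) (abs_le_one i j'))
      (by positivity) (mul_le_one₀ (abs_le_one i' j) (abs_nonneg _) (abs_le_one i' j'))
  by_cases distinct : [i, i', j, j'].Nodup
  · rw [if_pos distinct, le_add_iff_nonneg_right]
    positivity
  rw [if_neg distinct, zero_add]
  by_cases hi : i = i'
  · rw [if_pos hi]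
    exact term_le_one.trans (le_add_of_nonneg_right (by positivity))
  by_cases hj : j = j'
  · rw [if_pos hj]
    exact term_le_one.trans (le_add_of_nonneg_left (by positivity))
  have on_diag : i = j ∨ i = j' ∨ i' = j ∨ i' = j' := by
    simp only [List.nodup_cons, List.mem_cons, List.not_mem_nil] at distinct
    tauto
  rcases on_diag with rfl | rfl | rfl | rfl <;> simp [diag, hi, hj]

variable [Fintype V]

/-- The part of `fourCycleSum` carried by genuine four-cycles, that is, by four distinct
vertices. Unlike the full sum it is multiaffine in the edge weights. -/
def properFourCycleSum (D : V → V → ℝ) : ℝ :=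
  ∑ i, ∑ i', ∑ j, ∑ j',
    if [i, i', j, j'].Nodup then D i j * D i j' * (D i' j * D i' j') else 0

lemma isMultiaffine_properFourCycleSum (h : Sym2 V → ℝ) :
    IsMultiaffine fun g : Sym2 V → ℝ => properFourCycleSum fun i j => g s(i, j) - h s(i, j) := by
  refine .sum fun i => .sum fun i' => .sum fun j => .sum fun j' => ?_
  split_ifs with distinct
  · have edges_prod (g : Sym2 V → ℝ) :
        ∏ e ∈ {s(i, j), s(i, j'), s(i', j), s(i', j')}, (g e - h e) =
          (g s(i, j) - h s(i, j)) * (g s(i, j') - h s(i, j')) *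
            ((g s(i', j) - h s(i', j)) * (g s(i', j') - h s(i', j'))) := by
      simp only [List.nodup_cons, List.mem_cons, List.not_mem_nil] at distinct
      rw [Finset.prod_insert, Finset.prod_insert, Finset.prod_insert, Finset.prod_singleton,
        mul_assoc]
      all_goals
        simp only [Finset.mem_insert, Finset.mem_singleton, Sym2.eq_iff]
        tauto
    simpa only [edges_prod] using
      IsMultiaffine.prod_sub h {s(i, j), s(i, j'), s(i', j), s(i', j')}
  · exact .const 0

lemma fourCycleSum_le_properFourCycleSum_add {D : V → V → ℝ}
    (abs_le_one : ∀ i j, |D i j| ≤ 1) (diag : ∀ i, D i i = 0) :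
    fourCycleSum D ≤ properFourCycleSum D + 2 * (Fintype.card V : ℝ) ^ 3 := by
  calc fourCycleSum D ≤ ∑ i, ∑ i', ∑ j, ∑ j',
        ((if [i, i', j, j'].Nodup then D i j * D i j' * (D i' j * D i' j') else 0) +
          ((if i = i' then 1 else 0) + (if j = j' then 1 else 0))) :=
        Finset.sum_le_sum fun i _ => Finset.sum_le_sum fun i' _ => Finset.sum_le_sum fun j _ =>
          Finset.sum_le_sum fun j' _ => fourCycleSum_term_le abs_le_one diag i i' j j'
    _ = properFourCycleSum D + 2 * (Fintype.card V : ℝ) ^ 3 := by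
        simp only [Finset.sum_add_distrib]
        congr 1
        simp
        ring

end ProperFourCycleSum

section

variable {V : Type*}

open Classical in
/-- The probability that a random edge indicator of mean `w` agrees with the graph `F` at the
pair `i, j`. -/
def edgeProb (F : SimpleGraph V) (i j : V) (w : ℝ) : ℝ := if F.Adj i j then w else 1 - w

open Classical in
lemma exists_graph_fourCycleSum_le [Fintype V] {w : V → V → ℝ} (symm : ∀ i j, w i j = w j i)
    (mem_Icc : ∀ i j, w i j ∈ Icc (0 : ℝ) 1) (diag : ∀ i, w i i = 0) :
    ∃ G : SimpleGraph V, (∀ i j, 0 < edgeProb G i j (w i j)) ∧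
      fourCycleSum (fun i j => (if G.Adj i j then 1 else 0) - w i j) ≤
        2 * (Fintype.card V : ℝ) ^ 3 := by
  let h : Sym2 V → ℝ := Sym2.lift ⟨w, symm⟩
  have hh (e : Sym2 V) : h e ∈ Icc (0 : ℝ) 1 := by
    induction e with | h i j => exact mem_Icc i j
  obtain ⟨g, hg, hgh⟩ := (isMultiaffine_properFourCycleSum h).exists_rounding_le hh
  have rounding (i j : V) : g s(i, j) = 0 ∧ w i j < 1 ∨ g s(i, j) = 1 ∧ 0 < w i j := hg s(i, j)
  have not_loop (i : V) : g s(i, i) = 0 := by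
    simpa [diag] using rounding i i
  let G : SimpleGraph V :=
    { Adj := fun i j => g s(i, j) = 1
      symm := ⟨fun i j => by rw [Sym2.eq_swap]; exact id⟩
      loopless := ⟨fun i => by simp [not_loop]⟩ }
  have indicator_eq (i j : V) : (if G.Adj i j then 1 else 0) = g s(i, j) := by
    rcases rounding i j with hij | hij <;> simp [G, hij.1]
  refine ⟨G, fun i j => ?_, ?_⟩
  · rcases rounding i j with hij | hij <;> simp [edgeProb, G, hij]
  · simp only [indicator_eq]
    have start_eq_zero : properFourCycleSum (fun i j => h s(i, j) - h s(i, j)) = 0 := by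
      simp [properFourCycleSum]
    have abs_le_one (i j : V) : |g s(i, j) - w i j| ≤ 1 := by
      rcases rounding i j with hij | hij <;> rw [hij.1, abs_le] <;> constructor <;>
        linarith [(mem_Icc i j).1, (mem_Icc i j).2]
    calc fourCycleSum (fun i j => g s(i, j) - w i j)
        ≤ properFourCycleSum (fun i j => g s(i, j) - w i j) + 2 * (Fintype.card V : ℝ) ^ 3 :=
          fourCycleSum_le_properFourCycleSum_add abs_le_one fun i => by
            rw [not_loop, diag, sub_zero]
      _ ≤ 2 * (Fintype.card V : ℝ) ^ 3 := by
          have final_le_zero : properFourCycleSum (fun i j => g s(i, j) - w i j) ≤ 0 :=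
            hgh.trans_eq start_eq_zero
          linarith

end
/-! ### The cut norm as a bilinear form -/

section CutForm

variable {α β : Type*} [MeasurableSpace α] [MeasurableSpace β] {μ : Measure α} {ν : Measure β}

lemma integrable_mul_of_mem_Icc {f a : α → ℝ} (hf : Integrable f μ) (ha : Measurable a)
    (ha01 : ∀ x, a x ∈ Icc (0 : ℝ) 1) : Integrable (fun x => a x * f x) μ :=
  hf.bdd_mul (c := 1) ha.aestronglyMeasurable <| .of_forall fun x => by
    rw [Real.norm_of_nonneg (ha01 x).1]
    exact (ha01 x).2

lemma exists_integral_mul_le_setIntegral {f a : α → ℝ} (hf : Integrable f μ) (ha : Measurable a)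
    (ha01 : ∀ x, a x ∈ Icc (0 : ℝ) 1) :
    ∃ S, MeasurableSet S ∧ ∫ x, a x * f x ∂μ ≤ ∫ x in S, f x ∂μ := by
  let f' := hf.1.mk f
  have hS : MeasurableSet {x | 0 ≤ f' x} :=
    measurableSet_le measurable_const hf.1.stronglyMeasurable_mk.measurable
  refine ⟨{x | 0 ≤ f' x}, hS, ?_⟩
  rw [← integral_indicator hS]
  refine integral_mono_ae (integrable_mul_of_mem_Icc hf ha ha01) (hf.indicator hS) ?_
  filter_upwards [hf.1.ae_eq_mk] with x hx
  by_cases hx0 : 0 ≤ f' x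
  · rw [indicator_of_mem (show x ∈ {x | 0 ≤ f' x} from hx0), hx]
    exact mul_le_of_le_one_left hx0 (ha01 x).2
  · rw [indicator_of_notMem (show x ∉ {x | 0 ≤ f' x} from hx0), hx]
    exact mul_nonpos_of_nonneg_of_nonpos (ha01 x).1 (not_le.1 hx0).le

variable [SFinite μ] [SFinite ν]

lemma exists_integral_fst_mul_le {f : α × β → ℝ} (hf : Integrable f (μ.prod ν)) {a : α → ℝ}
    (ha : Measurable a) (ha01 : ∀ x, a x ∈ Icc (0 : ℝ) 1) :
    ∃ S, MeasurableSet S ∧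
      ∫ p, a p.1 * f p ∂μ.prod ν ≤ ∫ p, f p ∂(μ.restrict S).prod ν := by
  obtain ⟨S, hS, hle⟩ := exists_integral_mul_le_setIntegral hf.integral_prod_left ha ha01
  refine ⟨S, hS, ?_⟩
  have hfS : Integrable f ((μ.restrict S).prod ν) := by
    rw [← Measure.restrict_univ (μ := ν), Measure.prod_restrict]
    exact hf.restrict
  have haf : Integrable (fun p => a p.1 * f p) (μ.prod ν) :=
    integrable_mul_of_mem_Icc hf (ha.comp measurable_fst) fun p => ha01 p.1
  rw [integral_prod _ haf, integral_prod f hfS]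
  simpa only [integral_const_mul] using hle

lemma exists_integral_mul_mul_le {f : α × β → ℝ} (hf : Integrable f (μ.prod ν)) {a : α → ℝ}
    {b : β → ℝ} (ha : Measurable a) (ha01 : ∀ x, a x ∈ Icc (0 : ℝ) 1) (hb : Measurable b)
    (hb01 : ∀ y, b y ∈ Icc (0 : ℝ) 1) :
    ∃ S T, MeasurableSet S ∧ MeasurableSet T ∧
      ∫ p, a p.1 * b p.2 * f p ∂μ.prod ν ≤ ∫ p in S ×ˢ T, f p ∂μ.prod ν := by
  have hbf : Integrable (fun p => b p.2 * f p) (μ.prod ν) :=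
    integrable_mul_of_mem_Icc hf (hb.comp measurable_snd) fun p => hb01 p.2
  obtain ⟨S, hS, hle_S⟩ := exists_integral_fst_mul_le hbf ha ha01
  have hf_swap : Integrable (f ∘ Prod.swap) (ν.prod (μ.restrict S)) := by
    rw [← Measure.restrict_univ (μ := ν), Measure.prod_restrict]
    exact hf.swap.restrict
  obtain ⟨T, hT, hle_T⟩ := exists_integral_fst_mul_le hf_swap hb hb01
  refine ⟨S, T, hS, hT, ?_⟩
  calc ∫ p, a p.1 * b p.2 * f p ∂μ.prod ν
      ≤ ∫ p, b p.2 * f p ∂(μ.restrict S).prod ν := by simpa only [mul_assoc] using hle_S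
    _ = ∫ p, b p.1 * f p.swap ∂ν.prod (μ.restrict S) :=
        (integral_prod_swap (μ := μ.restrict S) (ν := ν) fun p => b p.2 * f p).symm
    _ ≤ ∫ p, f p.swap ∂(ν.restrict T).prod (μ.restrict S) := hle_T
    _ = ∫ p in S ×ˢ T, f p ∂μ.prod ν := by rw [integral_prod_swap, Measure.prod_restrict]

lemma abs_integral_mul_mul_le {f : α × β → ℝ} (hf : Integrable f (μ.prod ν)) {c : ℝ}
    (hc : ∀ S T, MeasurableSet S → MeasurableSet T → |∫ p in S ×ˢ T, f p ∂μ.prod ν| ≤ c)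
    {a : α → ℝ} {b : β → ℝ} (ha : Measurable a) (ha01 : ∀ x, a x ∈ Icc (0 : ℝ) 1)
    (hb : Measurable b) (hb01 : ∀ y, b y ∈ Icc (0 : ℝ) 1) :
    |∫ p, a p.1 * b p.2 * f p ∂μ.prod ν| ≤ c := by
  obtain ⟨S, T, hS, hT, hle⟩ := exists_integral_mul_mul_le hf ha ha01 hb hb01
  obtain ⟨S', T', hS', hT', hle'⟩ := exists_integral_mul_mul_le hf.neg ha ha01 hb hb01
  simp only [Pi.neg_apply, mul_neg, integral_neg] at hle'
  exact abs_le'.2 ⟨hle.trans ((le_abs_self _).trans (hc S T hS hT)),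
    hle'.trans ((neg_le_abs _).trans (hc S' T' hS' hT'))⟩

end CutForm

/-! ### Resampling coordinates of a product measure -/

section Resample

variable {ι : Type*} [Fintype ι] {α : ι → Type*} [∀ i, MeasurableSpace (α i)]
  (μ : ∀ i, Measure (α i)) [∀ i, IsProbabilityMeasure (μ i)]

lemma measurePreserving_update [DecidableEq ι] (i : ι) :
    MeasurePreserving (fun p : (∀ i, α i) × α i => Function.update p.1 i p.2)
      ((Measure.pi μ).prod (μ i)) (Measure.pi μ) := by
  refine ⟨measurable_update', Eq.symm <| Measure.pi_eq fun s hs => ?_⟩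
  have preimage_eq : (fun p : (∀ i, α i) × α i => Function.update p.1 i p.2) ⁻¹' univ.pi s =
      univ.pi (Function.update s i univ) ×ˢ s i := by
    ext ⟨x, t⟩
    rw [mem_preimage, mem_prod, mem_univ_pi, mem_univ_pi,
      Function.forall_update_iff x fun k u => u ∈ s k,
      Function.forall_update_iff s fun k u => x k ∈ u]
    simp only [mem_univ, true_and, and_comm]
  have prod_update_eq : ∏ k, μ k (Function.update s i univ k) =
      ∏ k ∈ Finset.univ.erase i, μ k (s k) := by
    rw [← Finset.prod_erase_mul _ _ (Finset.mem_univ i), Function.update_self, measure_univ,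
      mul_one]
    exact Finset.prod_congr rfl fun k hk => by
      rw [Function.update_of_ne (Finset.ne_of_mem_erase hk)]
  rw [Measure.map_apply measurable_update' (.univ_pi hs), preimage_eq, Measure.prod_prod,
    Measure.pi_pi, prod_update_eq, Finset.prod_erase_mul _ _ (Finset.mem_univ i)]

lemma measurePreserving_update_update [DecidableEq ι] (i j : ι) :
    MeasurePreserving
      (fun p : (∀ i, α i) × α i × α j => Function.update (Function.update p.1 i p.2.1) j p.2.2)
      ((Measure.pi μ).prod ((μ i).prod (μ j))) (Measure.pi μ) :=
  (measurePreserving_update μ j).comp <|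
    ((measurePreserving_update μ i).prod (.id (μ j))).comp
      (measurePreserving_prodAssoc (Measure.pi μ) (μ i) (μ j)).symm

variable {i j : ι}

lemma measurePreserving_eval_prod (hij : i ≠ j) :
    MeasurePreserving (fun x : ∀ i, α i => (x i, x j)) (Measure.pi μ) ((μ i).prod (μ j)) := by
  classical
  have resample := measurePreserving_update_update μ i j
  refine ⟨by fun_prop, ?_⟩
  rw [← resample.map_eq, Measure.map_map (by fun_prop) resample.measurable]
  convert (measurePreserving_snd (μ := Measure.pi μ) (ν := (μ i).prod (μ j))).map_eq using 2
  ext p <;> simp [hij]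

lemma abs_integral_pi_mul_mul_le [DecidableEq ι] (hij : i ≠ j) {f : α i × α j → ℝ}
    (hf : Integrable f ((μ i).prod (μ j))) {c : ℝ}
    (hc : ∀ S T, MeasurableSet S → MeasurableSet T → |∫ p in S ×ˢ T, f p ∂(μ i).prod (μ j)| ≤ c)
    {A B : (∀ i, α i) → ℝ} (hA : Measurable A) (hA01 : ∀ x, A x ∈ Icc (0 : ℝ) 1)
    (hAj : ∀ x t, A (Function.update x j t) = A x) (hB : Measurable B)
    (hB01 : ∀ x, B x ∈ Icc (0 : ℝ) 1) (hBi : ∀ x t, B (Function.update x i t) = B x) :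
    |∫ x, A x * B x * f (x i, x j) ∂Measure.pi μ| ≤ c := by
  have resample := measurePreserving_update_update μ i j
  have integrable : Integrable (fun x => A x * B x * f (x i, x j)) (Measure.pi μ) :=
    integrable_mul_of_mem_Icc
      ((measurePreserving_eval_prod μ hij).integrable_comp_of_integrable hf) (hA.mul hB) fun x =>
      ⟨mul_nonneg (hA01 x).1 (hB01 x).1, mul_le_one₀ (hA01 x).2 (hB01 x).1 (hB01 x).2⟩
  have decouple (x : ∀ i, α i) (s : α i) (t : α j) :
      A (Function.update (Function.update x i s) j t) *
          B (Function.update (Function.update x i s) j t) *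
            f (Function.update (Function.update x i s) j t i,
              Function.update (Function.update x i s) j t j) =
        A (Function.update x i s) * B (Function.update x j t) * f (s, t) := by
    have hB_eq : B (Function.update (Function.update x i s) j t) = B (Function.update x j t) := by
      rw [Function.update_comm hij, hBi]
    rw [hB_eq, hAj, Function.update_self, Function.update_of_ne hij, Function.update_self]
  rw [← resample.map_eq, integral_map resample.aemeasurable
    (by rw [resample.map_eq]; exact integrable.1)]
  have integrable_resample := resample.integrable_comp_of_integrable integrable
  simp only [Function.comp_def, decouple] at integrable_resample ⊢
  rw [integral_prod _ integrable_resample]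
  rw [← Real.norm_eq_abs, ← mul_one c, ← probReal_univ (μ := Measure.pi μ)]
  refine norm_integral_le_of_norm_le_const (.of_forall fun x => ?_)
  exact abs_integral_mul_mul_le hf hc (hA.comp (measurable_update x)) (fun s => hA01 _)
    (hB.comp (measurable_update x)) fun t => hB01 _

end Resample

/-! ### The counting lemma -/

section Counting

variable {ι α : Type*}

lemma prod_apply_pair_mem_Icc {s : Finset (ι × ι)} {f : ι × ι → α × α → ℝ}
    (hf01 : ∀ e p, f e p ∈ Icc (0 : ℝ) 1) (x : ι → α) :
    ∏ e ∈ s, f e (x e.1, x e.2) ∈ Icc (0 : ℝ) 1 :=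
  ⟨Finset.prod_nonneg fun e _ => (hf01 e _).1,
    Finset.prod_le_one (fun e _ => (hf01 e _).1) fun e _ => (hf01 e _).2⟩

variable [MeasurableSpace α]

lemma measurable_prod_apply_pair {s : Finset (ι × ι)} {f : ι × ι → α × α → ℝ}
    (hf : ∀ e, Measurable (f e)) : Measurable fun x : ι → α => ∏ e ∈ s, f e (x e.1, x e.2) :=
  Finset.measurable_fun_prod _ fun e _ =>
    (hf e).comp ((measurable_pi_apply e.1).prodMk (measurable_pi_apply e.2))

variable [Fintype ι] {μ : Measure α} [IsProbabilityMeasure μ]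
  {E : Finset (ι × ι)} {c : ℝ}

lemma integrable_prod_apply_pair {f : ι × ι → α × α → ℝ} (hf : ∀ e, Measurable (f e))
    (hf01 : ∀ e p, f e p ∈ Icc (0 : ℝ) 1) :
    Integrable (fun x : ι → α => ∏ e ∈ E, f e (x e.1, x e.2)) (Measure.pi fun _ => μ) :=
  .of_mem_Icc 0 1 (measurable_prod_apply_pair hf).aemeasurable <|
    .of_forall fun x => prod_apply_pair_mem_Icc hf01 x

variable [LinearOrder ι]

/-- An edge other than `e₀` avoids an endpoint of `e₀`, so the product splits into two factors, each
independent of one of the two endpoints. -/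
lemma abs_integral_mul_prod_erase_le {f : ι × ι → α × α → ℝ} (hf : ∀ e, Measurable (f e))
    (hf01 : ∀ e p, f e p ∈ Icc (0 : ℝ) 1) (hE : ∀ e ∈ E, e.1 < e.2) {e₀ : ι × ι} (he₀ : e₀ ∈ E)
    {u : α × α → ℝ} (hu : Integrable u (μ.prod μ))
    (hc : ∀ S T, MeasurableSet S → MeasurableSet T → |∫ p in S ×ˢ T, u p ∂μ.prod μ| ≤ c) :
    |∫ x, (∏ e ∈ E.erase e₀, f e (x e.1, x e.2)) * u (x e₀.1, x e₀.2) ∂Measure.pi fun _ : ι => μ|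
      ≤ c := by
  have update_eq {s : Finset (ι × ι)} {k : ι} (hs : ∀ e ∈ s, e.1 ≠ k ∧ e.2 ≠ k) (x : ι → α)
      (t : α) : ∏ e ∈ s, f e (Function.update x k t e.1, Function.update x k t e.2) =
        ∏ e ∈ s, f e (x e.1, x e.2) :=
    Finset.prod_congr rfl fun e he => by
      rw [Function.update_of_ne (hs e he).1, Function.update_of_ne (hs e he).2]
  let avoids_snd (e : ι × ι) : Prop := e.1 ≠ e₀.2 ∧ e.2 ≠ e₀.2
  simp only [← Finset.prod_filter_mul_prod_filter_not (E.erase e₀) avoids_snd]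
  refine abs_integral_pi_mul_mul_le (fun _ => μ) (hE e₀ he₀).ne hu hc
    (measurable_prod_apply_pair hf) (prod_apply_pair_mem_Icc hf01) (update_eq fun e he => ?_)
    (measurable_prod_apply_pair hf) (prod_apply_pair_mem_Icc hf01) (update_eq fun e he => ?_)
  · exact (Finset.mem_filter.1 he).2
  · obtain ⟨heE, htouch⟩ := Finset.mem_filter.1 he
    obtain ⟨hne, heE⟩ := Finset.mem_erase.1 heE
    have hlt := hE e heE
    have hlt₀ := hE e₀ he₀
    simp only [avoids_snd, ne_eq] at htouch
    rw [ne_eq, Prod.ext_iff] at hne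
    grind

lemma abs_integral_prod_update_sub_le {f : ι × ι → α × α → ℝ} (hf : ∀ e, Measurable (f e))
    (hf01 : ∀ e p, f e p ∈ Icc (0 : ℝ) 1) (hE : ∀ e ∈ E, e.1 < e.2) {e₀ : ι × ι} (he₀ : e₀ ∈ E)
    {u : α × α → ℝ} (hu : Measurable u) (hu01 : ∀ p, u p ∈ Icc (0 : ℝ) 1)
    (hc : ∀ S T, MeasurableSet S → MeasurableSet T →
      |∫ p in S ×ˢ T, (u p - f e₀ p) ∂μ.prod μ| ≤ c) :
    |(∫ x, ∏ e ∈ E, Function.update f e₀ u e (x e.1, x e.2) ∂Measure.pi fun _ : ι => μ) -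
      ∫ x, ∏ e ∈ E, f e (x e.1, x e.2) ∂Measure.pi fun _ : ι => μ| ≤ c := by
  have update_measurable : ∀ e, Measurable (Function.update f e₀ u e) :=
    (Function.forall_update_iff f fun _ v => Measurable v).2 ⟨hu, fun e _ => hf e⟩
  have update_mem_Icc : ∀ e p, Function.update f e₀ u e p ∈ Icc (0 : ℝ) 1 :=
    (Function.forall_update_iff f fun _ v => ∀ p, v p ∈ Icc (0 : ℝ) 1).2
      ⟨hu01, fun e _ => hf01 e⟩
  have factor_out (x : ι → α) :
      ∏ e ∈ E, Function.update f e₀ u e (x e.1, x e.2) - ∏ e ∈ E, f e (x e.1, x e.2) =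
        (∏ e ∈ E.erase e₀, f e (x e.1, x e.2)) *
          (u (x e₀.1, x e₀.2) - f e₀ (x e₀.1, x e₀.2)) := by
    have erase_eq : ∏ e ∈ E.erase e₀, Function.update f e₀ u e (x e.1, x e.2) =
        ∏ e ∈ E.erase e₀, f e (x e.1, x e.2) :=
      Finset.prod_congr rfl fun e he => by rw [Function.update_of_ne (Finset.ne_of_mem_erase he)]
    rw [← Finset.prod_erase_mul E _ he₀, ← Finset.prod_erase_mul E _ he₀, erase_eq,
      Function.update_self, mul_sub]
  have integrable_of_mem_Icc {v : α × α → ℝ} (hv : Measurable v)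
      (hv01 : ∀ p, v p ∈ Icc (0 : ℝ) 1) : Integrable v (μ.prod μ) :=
    .of_mem_Icc 0 1 hv.aemeasurable (.of_forall hv01)
  rw [← integral_sub (integrable_prod_apply_pair update_measurable update_mem_Icc)
    (integrable_prod_apply_pair hf hf01)]
  simp only [factor_out]
  exact abs_integral_mul_prod_erase_le hf hf01 hE he₀
    ((integrable_of_mem_Icc hu hu01).sub (integrable_of_mem_Icc (hf e₀) (hf01 e₀))) hc

lemma abs_integral_prod_sub_integral_prod_le {f g : ι × ι → α × α → ℝ}
    (hf : ∀ e, Measurable (f e)) (hf01 : ∀ e p, f e p ∈ Icc (0 : ℝ) 1)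
    (hg : ∀ e, Measurable (g e)) (hg01 : ∀ e p, g e p ∈ Icc (0 : ℝ) 1)
    (hE : ∀ e ∈ E, e.1 < e.2)
    (hc : ∀ e ∈ E, ∀ S T, MeasurableSet S → MeasurableSet T →
      |∫ p in S ×ˢ T, (f e p - g e p) ∂μ.prod μ| ≤ c) :
    |(∫ x, ∏ e ∈ E, f e (x e.1, x e.2) ∂Measure.pi fun _ : ι => μ) -
      ∫ x, ∏ e ∈ E, g e (x e.1, x e.2) ∂Measure.pi fun _ : ι => μ| ≤ E.card * c := by
  suffices telescope : ∀ D ⊆ E,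
      |(∫ x, ∏ e ∈ E, D.piecewise f g e (x e.1, x e.2) ∂Measure.pi fun _ : ι => μ) -
        ∫ x, ∏ e ∈ E, g e (x e.1, x e.2) ∂Measure.pi fun _ : ι => μ| ≤ D.card * c by
    have piecewise_eq (x : ι → α) : ∏ e ∈ E, E.piecewise f g e (x e.1, x e.2) =
        ∏ e ∈ E, f e (x e.1, x e.2) :=
      Finset.prod_congr rfl fun e he => by rw [Finset.piecewise_eq_of_mem _ _ _ he]
    simpa only [piecewise_eq] using telescope E subset_rfl
  intro D hD
  induction D using Finset.induction_on with
  | empty => simp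
  | insert e₀ D he₀ ih =>
    obtain ⟨he₀E, hDE⟩ := Finset.insert_subset_iff.1 hD
    have swap := abs_integral_prod_update_sub_le (f := D.piecewise f g) (μ := μ)
      (fun e => D.piecewise_cases f g Measurable (hf e) (hg e))
      (fun e => D.piecewise_cases f g (fun v => ∀ p, v p ∈ Icc (0 : ℝ) 1) (hf01 e) (hg01 e))
      hE he₀E (hf e₀) (hf01 e₀)
      (by simpa only [Finset.piecewise_eq_of_notMem _ _ _ he₀] using hc e₀ he₀E)
    rw [Finset.piecewise_insert, Finset.card_insert_of_notMem he₀]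
    calc _ ≤ _ := abs_sub_le _ _ _
      _ ≤ c + D.card * c := add_le_add swap (ih hDE)
      _ = _ := by push_cast; ring

end Counting

/-! ### The cut norm and the cut distance -/

/-- The uniform probability measure on `[0, 1]`, as a measure on `ℝ`. -/
abbrev unitMeasure : Measure ℝ := volume.restrict (Icc 0 1)

instance : IsProbabilityMeasure unitMeasure := ⟨by simp⟩

lemma unitMeasure_prod_unitMeasure :
    unitMeasure.prod unitMeasure = volume.restrict (Icc 0 1 ×ˢ Icc 0 1) := by
  rw [Measure.prod_restrict, Measure.volume_eq_prod]

lemma setIntegral_unitMeasure_prod {S T : Set ℝ} (hS : MeasurableSet S) (hT : MeasurableSet T)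
    (f : ℝ × ℝ → ℝ) :
    ∫ p in S ×ˢ T, f p ∂unitMeasure.prod unitMeasure =
      ∫ p in (S ∩ Icc 0 1) ×ˢ (T ∩ Icc 0 1), f p := by
  rw [unitMeasure_prod_unitMeasure, Measure.restrict_restrict (hS.prod hT), prod_inter_prod]

lemma cutNorm_nonneg (U : ℝ → ℝ → ℝ) : 0 ≤ cutNorm U := by
  refine Real.sSup_nonneg ?_
  rintro r ⟨S, T, -, -, -, -, rfl⟩
  exact abs_nonneg _

lemma deltaCut_nonneg (W₁ W₂ : ℝ → ℝ → ℝ) : 0 ≤ deltaCut W₁ W₂ := by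
  refine Real.sInf_nonneg ?_
  rintro r ⟨σ₁, σ₂, -, -, rfl⟩
  exact cutNorm_nonneg _

lemma cutNorm_le {U : ℝ → ℝ → ℝ} {c : ℝ}
    (h : ∀ S T, MeasurableSet S → MeasurableSet T →
      |∫ p in S ×ˢ T, U p.1 p.2 ∂unitMeasure.prod unitMeasure| ≤ c) :
    cutNorm U ≤ c := by
  refine csSup_le ⟨_, ∅, ∅, .empty, .empty, empty_subset _, empty_subset _, rfl⟩ ?_
  rintro r ⟨S, T, hS, hT, hS01, hT01, rfl⟩
  simpa only [setIntegral_unitMeasure_prod hS hT, inter_eq_left.2 hS01, inter_eq_left.2 hT01]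
    using h S T hS hT

section Integrable

variable {U V : ℝ → ℝ → ℝ}

lemma abs_setIntegral_le_integral_abs
    (hU : Integrable (fun p : ℝ × ℝ => U p.1 p.2) (unitMeasure.prod unitMeasure))
    (A : Set (ℝ × ℝ)) :
    |∫ p in A, U p.1 p.2 ∂unitMeasure.prod unitMeasure| ≤
      ∫ p, |U p.1 p.2| ∂unitMeasure.prod unitMeasure :=
  abs_integral_le_integral_abs.trans <|
    setIntegral_le_integral hU.abs (ae_of_all _ fun _ => abs_nonneg _)

lemma cutNorm_le_integral_abs
    (hU : Integrable (fun p : ℝ × ℝ => U p.1 p.2) (unitMeasure.prod unitMeasure)) :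
    cutNorm U ≤ ∫ p, |U p.1 p.2| ∂unitMeasure.prod unitMeasure :=
  cutNorm_le fun _ _ _ _ => abs_setIntegral_le_integral_abs hU _

lemma abs_setIntegral_le_cutNorm
    (hU : Integrable (fun p : ℝ × ℝ => U p.1 p.2) (unitMeasure.prod unitMeasure))
    {S T : Set ℝ} (hS : MeasurableSet S) (hT : MeasurableSet T) :
    |∫ p in S ×ˢ T, U p.1 p.2 ∂unitMeasure.prod unitMeasure| ≤ cutNorm U := by
  refine le_csSup ⟨∫ p, |U p.1 p.2| ∂unitMeasure.prod unitMeasure, ?_⟩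
    ⟨S ∩ Icc 0 1, T ∩ Icc 0 1, hS.inter measurableSet_Icc, hT.inter measurableSet_Icc,
      inter_subset_right, inter_subset_right, by rw [setIntegral_unitMeasure_prod hS hT]⟩
  rintro r ⟨S, T, hS, hT, hS01, hT01, rfl⟩
  have h := abs_setIntegral_le_integral_abs hU (S ×ˢ T)
  rwa [setIntegral_unitMeasure_prod hS hT, inter_eq_left.2 hS01, inter_eq_left.2 hT01] at h

lemma cutNorm_add_le
    (hU : Integrable (fun p : ℝ × ℝ => U p.1 p.2) (unitMeasure.prod unitMeasure))
    (hV : Integrable (fun p : ℝ × ℝ => V p.1 p.2) (unitMeasure.prod unitMeasure)) :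
    cutNorm (fun x y => U x y + V x y) ≤ cutNorm U + cutNorm V := by
  refine cutNorm_le fun S T hS hT => ?_
  rw [integral_add hU.integrableOn hV.integrableOn]
  exact (abs_add_le _ _).trans <|
    add_le_add (abs_setIntegral_le_cutNorm hU hS hT) (abs_setIntegral_le_cutNorm hV hS hT)

end Integrable

lemma isMPSelf_id : IsMPSelf id := ⟨.id _, mapsTo_id _⟩

lemma deltaCut_le_dCut (W₁ W₂ : ℝ → ℝ → ℝ) : deltaCut W₁ W₂ ≤ dCut W₁ W₂ := by
  refine csInf_le ⟨0, ?_⟩ ⟨id, id, isMPSelf_id, isMPSelf_id, rfl⟩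
  rintro r ⟨σ₁, σ₂, -, -, rfl⟩
  exact cutNorm_nonneg _

/-! ### Induced densities -/

section Graphon

variable {W W₁ W₂ : ℝ → ℝ → ℝ}

lemma IsGraphon.measurable (hW : IsGraphon W) : Measurable fun p : ℝ × ℝ => W p.1 p.2 := hW.2.1

lemma IsGraphon.mem_Icc (hW : IsGraphon W) (x y : ℝ) : W x y ∈ Icc 0 1 := hW.2.2 x y

lemma IsGraphon.comp (hW : IsGraphon W) {σ : ℝ → ℝ} (hσ : Measurable σ) :
    IsGraphon fun x y => W (σ x) (σ y) :=
  ⟨fun _ _ => hW.1 _ _, hW.measurable.comp (hσ.prodMap hσ), fun _ _ => hW.mem_Icc _ _⟩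

lemma IsGraphon.integrable (hW : IsGraphon W) :
    Integrable (fun p : ℝ × ℝ => W p.1 p.2) (unitMeasure.prod unitMeasure) :=
  .of_mem_Icc 0 1 hW.measurable.aemeasurable (ae_of_all _ fun _ => hW.mem_Icc _ _)

lemma IsGraphon.integrable_sub (hW₁ : IsGraphon W₁) (hW₂ : IsGraphon W₂) :
    Integrable (fun p : ℝ × ℝ => W₁ p.1 p.2 - W₂ p.1 p.2) (unitMeasure.prod unitMeasure) :=
  hW₁.integrable.sub hW₂.integrable

end Graphon

section Edge

variable {V : Type*} (F : SimpleGraph V) (i j : V)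

lemma edgeProb_mem_Icc {w : ℝ} (hw : w ∈ Icc (0 : ℝ) 1) : edgeProb F i j w ∈ Icc (0 : ℝ) 1 := by
  unfold edgeProb
  split_ifs
  · exact hw
  · exact ⟨sub_nonneg.2 hw.2, sub_le_self _ hw.1⟩

lemma measurable_edgeProb : Measurable (edgeProb F i j) := by
  unfold edgeProb
  split_ifs <;> fun_prop

end Edge

lemma card_finset_prod_le_sq {m : ℕ} (E : Finset (Fin m × Fin m)) :
    (E.card : ℝ) ≤ (m : ℝ) ^ 2 := by
  have h : E.card ≤ m * m := by
    simpa only [Fintype.card_prod, Fintype.card_fin] using E.card_le_univ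
  rw [sq]
  exact_mod_cast h

section Density

variable {m : ℕ} (F : SimpleGraph (Fin m)) {W W₁ W₂ : ℝ → ℝ → ℝ}

/-- The probability that the `W`-random graph with vertex labels `x` equals `F`: each pair
`i < j` is joined independently with probability `W (x i) (x j)`. It is the integrand of the
induced density `inducedDensity F W`. -/
def sampleProb (F : SimpleGraph (Fin m)) (W : ℝ → ℝ → ℝ) (x : Fin m → ℝ) : ℝ :=
  ∏ e : Fin m × Fin m with e.1 < e.2, edgeProb F e.1 e.2 (W (x e.1) (x e.2))

lemma inducedDensity_eq_integral (W : ℝ → ℝ → ℝ) :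
    inducedDensity F W = ∫ x, sampleProb F W x ∂Measure.pi fun _ => unitMeasure := by
  simp only [inducedDensity, volume_pi, Measure.restrict_pi_pi, sampleProb, edgeProb,
    Finset.prod_filter, Fintype.prod_prod_type]

lemma sampleProb_mem_Icc (hW : IsGraphon W) (x : Fin m → ℝ) : sampleProb F W x ∈ Icc 0 1 :=
  prod_apply_pair_mem_Icc (f := fun e p => edgeProb F e.1 e.2 (W p.1 p.2))
    (fun _ _ => edgeProb_mem_Icc F _ _ (hW.mem_Icc _ _)) x

lemma measurable_sampleProb (hW : IsGraphon W) : Measurable (sampleProb F W) :=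
  measurable_prod_apply_pair (f := fun e p => edgeProb F e.1 e.2 (W p.1 p.2))
    fun _ => (measurable_edgeProb F _ _).comp hW.measurable

lemma integrable_sampleProb (hW : IsGraphon W) :
    Integrable (sampleProb F W) (Measure.pi fun _ => unitMeasure) :=
  .of_mem_Icc 0 1 (measurable_sampleProb F hW).aemeasurable
    (ae_of_all _ (sampleProb_mem_Icc F hW))

lemma inducedDensity_nonneg (hW : IsGraphon W) : 0 ≤ inducedDensity F W := by
  rw [inducedDensity_eq_integral]
  exact integral_nonneg fun x => (sampleProb_mem_Icc F hW x).1

lemma ae_sampleProb_eq_zero (hW : IsGraphon W) (h : inducedDensity F W = 0) :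
    ∀ᵐ x ∂Measure.pi fun _ => unitMeasure, sampleProb F W x = 0 := by
  rw [inducedDensity_eq_integral] at h
  exact (integral_eq_zero_iff_of_nonneg (fun x => (sampleProb_mem_Icc F hW x).1)
    (integrable_sampleProb F hW)).1 h

lemma inducedDensity_comp (hW : IsGraphon W) {σ : ℝ → ℝ} (hσ : IsMPSelf σ) :
    inducedDensity F (fun x y => W (σ x) (σ y)) = inducedDensity F W := by
  have hσm : MeasurePreserving (fun (x : Fin m → ℝ) i => σ (x i))
      (Measure.pi fun _ => unitMeasure) (Measure.pi fun _ => unitMeasure) :=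
    measurePreserving_pi _ _ fun _ => hσ.1
  rw [inducedDensity_eq_integral, inducedDensity_eq_integral, ← hσm.map_eq,
    integral_map hσm.aemeasurable (measurable_sampleProb F hW).aestronglyMeasurable, hσm.map_eq]
  rfl

lemma abs_inducedDensity_sub_le_dCut (hW₁ : IsGraphon W₁) (hW₂ : IsGraphon W₂) :
    |inducedDensity F W₁ - inducedDensity F W₂| ≤ (m : ℝ) ^ 2 * dCut W₁ W₂ := by
  set pairs : Finset (Fin m × Fin m) := {e | e.1 < e.2}
  have cut_le : ∀ e ∈ pairs, ∀ S T, MeasurableSet S → MeasurableSet T →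
      |∫ p in S ×ˢ T, (edgeProb F e.1 e.2 (W₁ p.1 p.2) - edgeProb F e.1 e.2 (W₂ p.1 p.2))
        ∂unitMeasure.prod unitMeasure| ≤ dCut W₁ W₂ := by
    intro e _ S T hS hT
    have h := abs_setIntegral_le_cutNorm (U := fun x y => W₁ x y - W₂ x y)
      (hW₁.integrable_sub hW₂) hS hT
    unfold edgeProb
    split_ifs
    · exact h
    · simp only [sub_sub_sub_cancel_left]
      rw [← abs_neg, ← integral_neg]
      simpa only [neg_sub, dCut] using h
  rw [inducedDensity_eq_integral, inducedDensity_eq_integral]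
  refine (abs_integral_prod_sub_integral_prod_le
    (f := fun e p => edgeProb F e.1 e.2 (W₁ p.1 p.2))
    (g := fun e p => edgeProb F e.1 e.2 (W₂ p.1 p.2))
    (fun _ => (measurable_edgeProb F _ _).comp hW₁.measurable)
    (fun _ _ => edgeProb_mem_Icc F _ _ (hW₁.mem_Icc _ _))
    (fun _ => (measurable_edgeProb F _ _).comp hW₂.measurable)
    (fun _ _ => edgeProb_mem_Icc F _ _ (hW₂.mem_Icc _ _))
    (fun _ he => (Finset.mem_filter.1 he).2) cut_le).trans ?_
  exact mul_le_mul_of_nonneg_right (card_finset_prod_le_sq pairs) (cutNorm_nonneg _)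

lemma abs_inducedDensity_sub_le_deltaCut (hW₁ : IsGraphon W₁) (hW₂ : IsGraphon W₂) :
    |inducedDensity F W₁ - inducedDensity F W₂| ≤ (m : ℝ) ^ 2 * deltaCut W₁ W₂ := by
  rw [deltaCut, ← smul_eq_mul, ← Real.sInf_smul_of_nonneg (by positivity)]
  refine le_csInf (.smul_set ⟨_, id, id, isMPSelf_id, isMPSelf_id, rfl⟩) ?_
  rintro _ ⟨_, ⟨σ₁, σ₂, hσ₁, hσ₂, rfl⟩, rfl⟩
  rw [← inducedDensity_comp F hW₁ hσ₁, ← inducedDensity_comp F hW₂ hσ₂]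
  exact abs_inducedDensity_sub_le_dCut F (hW₁.comp hσ₁.1.measurable) (hW₂.comp hσ₂.1.measurable)

end Density

/-! ### Step functions on the uniform grid -/

section Cell

variable {n : ℕ}

/-- The `i`-th interval of the partition of `(0, 1]` into `n` intervals of length `1 / n`; it
carries the vertex `i` in the graphon of a graph on `Fin n`. -/
def cell (n : ℕ) (i : Fin n) : Set ℝ := Ioc ((i : ℝ) / n) ((i + 1) / n)

lemma measurableSet_cell (i : Fin n) : MeasurableSet (cell n i) := measurableSet_Ioc

lemma mem_cell_iff_ceil {i : Fin n} {x : ℝ} :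
    x ∈ cell n i ↔ ⌈(n : ℝ) * x⌉ = ((i : ℕ) : ℤ) + 1 := by
  have hn : (0 : ℝ) < n := Nat.cast_pos.2 i.pos
  rw [cell, mem_Ioc, Int.ceil_eq_iff, div_lt_iff₀ hn, le_div_iff₀ hn]
  push_cast
  rw [add_sub_cancel_right, mul_comm x]

lemma eq_of_mem_cell {i j : Fin n} {x : ℝ} (hi : x ∈ cell n i) (hj : x ∈ cell n j) : i = j := by
  rw [mem_cell_iff_ceil] at hi hj
  omega

lemma exists_mem_cell (hn : 0 < n) {x : ℝ} (hx : x ∈ Ioc (0 : ℝ) 1) : ∃ i, x ∈ cell n i := by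
  have hn' : (0 : ℝ) < n := Nat.cast_pos.2 hn
  have ceil_pos : 0 < ⌈(n : ℝ) * x⌉ := Int.ceil_pos.2 (mul_pos hn' hx.1)
  have ceil_le : ⌈(n : ℝ) * x⌉ ≤ n := Int.ceil_le.2 (mul_le_of_le_one_right hn'.le hx.2)
  exact ⟨⟨(⌈(n : ℝ) * x⌉ - 1).toNat, by omega⟩, mem_cell_iff_ceil.2 (by dsimp only; omega)⟩

lemma cell_subset_Icc (i : Fin n) : cell n i ⊆ Icc 0 1 := by
  have hn : (0 : ℝ) < n := Nat.cast_pos.2 i.pos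
  have hi : (i : ℝ) + 1 ≤ n := by exact_mod_cast i.isLt
  exact (Ioc_subset_Ioc (by positivity) ((div_le_one hn).2 hi)).trans Ioc_subset_Icc_self

lemma abs_sub_le_of_mem_cell {i : Fin n} {x y : ℝ} (hx : x ∈ cell n i) (hy : y ∈ cell n i) :
    |x - y| ≤ 1 / n := by
  rw [cell, mem_Ioc, add_div] at hx hy
  rw [abs_le]
  constructor <;> linarith [hx.1, hx.2, hy.1, hy.2]

lemma unitMeasure_cell (i : Fin n) : unitMeasure (cell n i) = ENNReal.ofReal (1 / n) := by
  rw [Measure.restrict_eq_self _ (cell_subset_Icc i), cell, Real.volume_Ioc, add_div,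
    add_sub_cancel_left]

lemma unitMeasure_real_cell (i : Fin n) : unitMeasure.real (cell n i) = 1 / n := by
  rw [measureReal_def, unitMeasure_cell, ENNReal.toReal_ofReal (by positivity)]

lemma ae_mem_Ioc_unitMeasure : ∀ᵐ x ∂unitMeasure, x ∈ Ioc (0 : ℝ) 1 := by
  rw [unitMeasure, ← restrict_Ioc_eq_restrict_Icc]
  exact ae_restrict_mem measurableSet_Ioc

end Cell

section StepFun

variable {n : ℕ} {D : Fin n → Fin n → ℝ}

/-- The step function on the unit square with value `D i j` on the product of the `i`-th and the
`j`-th cell, and `0` off the cells. -/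
def stepFun (D : Fin n → Fin n → ℝ) (x y : ℝ) : ℝ :=
  ∑ i, ∑ j, (cell n i ×ˢ cell n j).indicator (fun _ => D i j) (x, y)

lemma stepFun_apply {i j : Fin n} {x y : ℝ} (hx : x ∈ cell n i) (hy : y ∈ cell n j) :
    stepFun D x y = D i j := by
  have other : ∀ i' j', (i', j') ≠ (i, j) →
      (cell n i' ×ˢ cell n j').indicator (fun _ => D i' j') (x, y) = 0 := fun i' j' h =>
    indicator_of_notMem (fun hxy => h (Prod.ext (eq_of_mem_cell hxy.1 hx)
      (eq_of_mem_cell hxy.2 hy))) _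
  rw [stepFun, ← Fintype.sum_prod_type', Fintype.sum_eq_single (i, j) fun e he => other e.1 e.2 he]
  exact indicator_of_mem (mk_mem_prod hx hy) _

lemma measurable_stepFun (D : Fin n → Fin n → ℝ) :
    Measurable fun p : ℝ × ℝ => stepFun D p.1 p.2 :=
  Finset.measurable_fun_sum _ fun i _ => Finset.measurable_fun_sum _ fun j _ =>
    measurable_const.indicator ((measurableSet_cell i).prod (measurableSet_cell j))

lemma integrable_stepFun (D : Fin n → Fin n → ℝ) :
    Integrable (fun p : ℝ × ℝ => stepFun D p.1 p.2) (unitMeasure.prod unitMeasure) :=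
  integrable_finsetSum _ fun i _ => integrable_finsetSum _ fun j _ =>
    (integrable_const _).indicator ((measurableSet_cell i).prod (measurableSet_cell j))

lemma stepFun_sub (D D' : Fin n → Fin n → ℝ) (x y : ℝ) :
    stepFun (fun i j => D i j - D' i j) x y = stepFun D x y - stepFun D' x y := by
  simp only [stepFun, ← Finset.sum_sub_distrib, indicator_sub]

lemma setIntegral_stepFun (D : Fin n → Fin n → ℝ) (S T : Set ℝ) :
    ∫ p in S ×ˢ T, stepFun D p.1 p.2 ∂unitMeasure.prod unitMeasure =
      ∑ i, ∑ j, unitMeasure.real (cell n i ∩ S) * unitMeasure.real (cell n j ∩ T) * D i j := by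
  have hcell (i j : Fin n) : MeasurableSet (cell n i ×ˢ cell n j) :=
    (measurableSet_cell i).prod (measurableSet_cell j)
  have hint (i j : Fin n) : Integrable ((cell n i ×ˢ cell n j).indicator fun _ => D i j)
      ((unitMeasure.prod unitMeasure).restrict (S ×ˢ T)) :=
    (integrable_const _).indicator (hcell i j)
  simp only [stepFun, Prod.mk.eta]
  rw [integral_finsetSum _ fun i _ => integrable_finsetSum _ fun j _ => hint i j]
  refine Finset.sum_congr rfl fun i _ => ?_
  rw [integral_finsetSum _ fun j _ => hint i j]
  refine Finset.sum_congr rfl fun j _ => ?_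
  rw [integral_indicator_const _ (hcell i j), measureReal_restrict_apply (hcell i j),
    prod_inter_prod, measureReal_prod_prod, smul_eq_mul]

lemma integral_stepFun (D : Fin n → Fin n → ℝ) :
    ∫ p, stepFun D p.1 p.2 ∂unitMeasure.prod unitMeasure = (∑ i, ∑ j, D i j) / n ^ 2 := by
  have h := setIntegral_stepFun D univ univ
  simp only [univ_prod_univ, Measure.restrict_univ, inter_univ, unitMeasure_real_cell] at h
  rw [h, Finset.sum_div]
  refine Finset.sum_congr rfl fun i _ => ?_
  rw [Finset.sum_div]
  exact Finset.sum_congr rfl fun j _ => by ring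

lemma sum_sq_unitMeasure_cell_inter_le (S : Set ℝ) :
    ∑ i, unitMeasure.real (cell n i ∩ S) ^ 2 ≤ 1 / n := by
  have h (i : Fin n) : unitMeasure.real (cell n i ∩ S) ≤ 1 / n :=
    (measureReal_mono inter_subset_left).trans_eq (unitMeasure_real_cell i)
  calc ∑ i, unitMeasure.real (cell n i ∩ S) ^ 2
      ≤ ∑ _ : Fin n, (1 / n : ℝ) ^ 2 :=
        Finset.sum_le_sum fun i _ => pow_le_pow_left₀ measureReal_nonneg (h i) 2
    _ = 1 / n := by
        rcases eq_or_ne n 0 with rfl | hn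
        · simp
        · simp only [Finset.sum_const, Finset.card_univ, Fintype.card_fin, nsmul_eq_mul]
          field_simp

lemma cutNorm_stepFun_le {c : ℝ} (hc : 0 ≤ c) (hD : fourCycleSum D ≤ (c * n) ^ 4) :
    cutNorm (stepFun D) ≤ c := by
  refine cutNorm_le fun S T _ _ => le_of_pow_le_pow_left₀ four_ne_zero hc ?_
  rw [setIntegral_stepFun, Even.pow_abs (by decide)]
  calc (∑ i, ∑ j, unitMeasure.real (cell n i ∩ S) * unitMeasure.real (cell n j ∩ T) * D i j) ^ 4
      ≤ (∑ i, unitMeasure.real (cell n i ∩ S) ^ 2) ^ 2 *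
          (∑ j, unitMeasure.real (cell n j ∩ T) ^ 2) ^ 2 * fourCycleSum D :=
        sum_mul_mul_pow_four_le _ _ _
    _ ≤ (1 / n) ^ 2 * (1 / n) ^ 2 * (c * n) ^ 4 := by
        gcongr <;> first | exact sum_sq_unitMeasure_cell_inter_le _ | exact fourCycleSum_nonneg D
    _ ≤ c ^ 4 := by
        rcases eq_or_ne n 0 with rfl | hn
        · simpa using pow_nonneg hc 4
        · exact le_of_eq (by field_simp)

end StepFun

section GraphonOfGraph

variable {n : ℕ} (G : SimpleGraph (Fin n))

open Classical in
lemma graphonOfGraph_eq_stepFun :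
    graphonOfGraph G = stepFun fun i j => if G.Adj i j then 1 else 0 := by
  funext x y
  by_cases h : ∃ i j, x ∈ cell n i ∧ y ∈ cell n j
  · obtain ⟨i, j, hx, hy⟩ := h
    rw [stepFun_apply hx hy, graphonOfGraph]
    refine if_congr ⟨?_, fun h => ⟨i, j, h, mem_cell_iff_ceil.1 hx, mem_cell_iff_ceil.1 hy⟩⟩ rfl rfl
    rintro ⟨i', j', h, hx', hy'⟩
    rwa [eq_of_mem_cell hx (mem_cell_iff_ceil.2 hx'), eq_of_mem_cell hy (mem_cell_iff_ceil.2 hy')]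
  · rw [graphonOfGraph, if_neg fun ⟨i, j, _, hx, hy⟩ =>
      h ⟨i, j, mem_cell_iff_ceil.2 hx, mem_cell_iff_ceil.2 hy⟩]
    exact (Finset.sum_eq_zero fun i _ => Finset.sum_eq_zero fun j _ =>
      indicator_of_notMem (fun hxy : (x, y) ∈ _ => h ⟨i, j, hxy⟩) _).symm

open Classical in
lemma graphonOfGraph_apply {i j : Fin n} {x y : ℝ} (hx : x ∈ cell n i) (hy : y ∈ cell n j) :
    graphonOfGraph G x y = if G.Adj i j then 1 else 0 := by
  rw [graphonOfGraph_eq_stepFun, stepFun_apply hx hy]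

lemma isGraphon_graphonOfGraph : IsGraphon (graphonOfGraph G) := by
  classical
  refine ⟨fun x y => ?_, ?_, fun x y => ?_⟩
  · refine if_congr ⟨?_, ?_⟩ rfl rfl <;> exact fun ⟨i, j, h, hx, hy⟩ => ⟨j, i, h.symm, hy, hx⟩
  · rw [graphonOfGraph_eq_stepFun]
    exact measurable_stepFun _
  · unfold graphonOfGraph
    split_ifs <;> simp

end GraphonOfGraph

/-! ### Limits of a hereditary class -/

lemma IsHereditary.comap_mem_of_injective {Q : GraphClass} (hQ : IsHereditary Q) {m n : ℕ}
    {v : Fin m → Fin n} (hv : Function.Injective v) {G : SimpleGraph (Fin n)} (hG : G ∈ Q n) :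
    G.comap v ∈ Q m := by
  have strictMono_sort : StrictMono (v ∘ Tuple.sort v) :=
    (Tuple.monotone_sort v).strictMono_of_injective (hv.comp (Tuple.sort v).injective)
  have h := hQ.1 m (Tuple.sort v)⁻¹ _ (hQ.2 m n _ strictMono_sort G hG)
  convert h using 1
  ext a b
  simp

/-- The union of the diagonal squares of the `n × n` grid: the pairs of points whose vertices in
a graph on `Fin n` coincide. -/
def diagonalCells (n : ℕ) : Set (ℝ × ℝ) := ⋃ k, cell n k ×ˢ cell n k

lemma measurableSet_diagonalCells (n : ℕ) : MeasurableSet (diagonalCells n) :=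
  .iUnion fun k => (measurableSet_cell k).prod (measurableSet_cell k)

lemma measureReal_diagonalCells_le (n : ℕ) :
    (unitMeasure.prod unitMeasure).real (diagonalCells n) ≤ 1 / n := by
  calc (unitMeasure.prod unitMeasure).real (diagonalCells n)
      ≤ ∑ k, (unitMeasure.prod unitMeasure).real (cell n k ×ˢ cell n k) :=
        measureReal_iUnion_fintype_le _
    _ = n * (1 / n * (1 / n) : ℝ) := by
        simp only [measureReal_prod_prod, unitMeasure_real_cell, Finset.sum_const,
          Finset.card_univ, Fintype.card_fin, nsmul_eq_mul]
    _ ≤ 1 / n := by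
        rw [← mul_assoc]
        refine mul_le_of_le_one_left (by positivity) ?_
        exact (mul_one_div (n : ℝ) n).trans_le (div_self_le_one _)

/-- The tuples of points of which two share a cell, so that their vertices in a graph on `Fin n`
are not distinct. -/
def collisions (m n : ℕ) : Set (Fin m → ℝ) :=
  ⋃ e ∈ (Finset.univ : Finset (Fin m)).offDiag, {x | (x e.1, x e.2) ∈ diagonalCells n}

lemma measurableSet_collisions (m n : ℕ) : MeasurableSet (collisions m n) :=
  Finset.measurableSet_biUnion _ fun e _ => measurableSet_preimage
    ((measurable_pi_apply e.1).prodMk (measurable_pi_apply e.2)) (measurableSet_diagonalCells n)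

lemma measureReal_collisions_le (m n : ℕ) :
    (Measure.pi fun _ => unitMeasure).real (collisions m n) ≤ (m : ℝ) ^ 2 * (1 / n) := by
  set μ := Measure.pi fun _ : Fin m => unitMeasure
  have pair_le : ∀ e ∈ (Finset.univ : Finset (Fin m)).offDiag,
      μ.real {x | (x e.1, x e.2) ∈ diagonalCells n} ≤ 1 / n := fun e he =>
    ((measurePreserving_eval_prod (fun _ => unitMeasure)
      (Finset.mem_offDiag.1 he).2.2).measureReal_preimage
        (measurableSet_diagonalCells n).nullMeasurableSet).trans_le
          (measureReal_diagonalCells_le n)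
  calc μ.real (collisions m n)
      ≤ ∑ e ∈ Finset.univ.offDiag, μ.real {x | (x e.1, x e.2) ∈ diagonalCells n} :=
        measureReal_biUnion_finset_le _ _
    _ ≤ ∑ e ∈ (Finset.univ : Finset (Fin m)).offDiag, (1 / n : ℝ) := Finset.sum_le_sum pair_le
    _ ≤ (m : ℝ) ^ 2 * (1 / n) := by
        rw [Finset.sum_const, nsmul_eq_mul]
        exact mul_le_mul_of_nonneg_right (card_finset_prod_le_sq _) (by positivity)

section Graph

variable {m n : ℕ} {F : SimpleGraph (Fin m)} {G : SimpleGraph (Fin n)}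

lemma eq_comap_of_sampleProb_ne_zero {v : Fin m → Fin n} {x : Fin m → ℝ}
    (hx : ∀ i, x i ∈ cell n (v i)) (h : sampleProb F (graphonOfGraph G) x ≠ 0) :
    F = G.comap v := by
  have adj_iff : ∀ i j, i < j → (F.Adj i j ↔ G.Adj (v i) (v j)) := by
    intro i j hij
    have hne := Finset.prod_ne_zero_iff.1 h (i, j) (Finset.mem_filter.2 ⟨Finset.mem_univ _, hij⟩)
    rw [graphonOfGraph_apply G (hx i) (hx j), edgeProb] at hne
    by_cases hF : F.Adj i j <;> by_cases hG : G.Adj (v i) (v j) <;> simp_all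
  ext i j
  rw [SimpleGraph.comap_adj]
  rcases lt_trichotomy i j with hij | rfl | hij
  · exact adj_iff i j hij
  · simp only [SimpleGraph.irrefl]
  · rw [F.adj_comm, G.adj_comm, adj_iff j i hij]

lemma IsHereditary.mem_collisions {Q : GraphClass} (hQ : IsHereditary Q) (hn : 0 < n)
    (hF : F ∉ Q m) (hG : G ∈ Q n) {x : Fin m → ℝ} (hx : ∀ i, x i ∈ Ioc 0 1)
    (h : sampleProb F (graphonOfGraph G) x ≠ 0) :
    x ∈ collisions m n := by
  choose v hv using fun i => exists_mem_cell hn (hx i)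
  have not_injective : ¬ Function.Injective v := fun hinj =>
    hF (eq_comap_of_sampleProb_ne_zero hv h ▸ hQ.comap_mem_of_injective hinj hG)
  rw [Function.not_injective_iff] at not_injective
  obtain ⟨i, j, hij, hne⟩ := not_injective
  exact mem_biUnion (x := (i, j))
    (Finset.mem_offDiag.2 ⟨Finset.mem_univ _, Finset.mem_univ _, hne⟩)
    (mem_iUnion.2 ⟨v i, hv i, hij ▸ hv j⟩)

lemma IsHereditary.inducedDensity_graphonOfGraph_le {Q : GraphClass} (hQ : IsHereditary Q)
    (hn : 0 < n) (hF : F ∉ Q m) (hG : G ∈ Q n) :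
    inducedDensity F (graphonOfGraph G) ≤ (m : ℝ) ^ 2 * (1 / n) := by
  have hGW := isGraphon_graphonOfGraph G
  have ae_mem_Ioc : ∀ᵐ x ∂Measure.pi fun _ : Fin m => unitMeasure, ∀ i, x i ∈ Ioc 0 1 :=
    ae_all_iff.2 fun i => Measure.tendsto_eval_ae_ae.eventually ae_mem_Ioc_unitMeasure
  have sampleProb_le : ∀ᵐ x ∂Measure.pi fun _ : Fin m => unitMeasure,
      sampleProb F (graphonOfGraph G) x ≤ (collisions m n).indicator 1 x := by
    filter_upwards [ae_mem_Ioc] with x hx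
    by_cases h : sampleProb F (graphonOfGraph G) x = 0
    · exact h.trans_le (indicator_nonneg (fun _ _ => zero_le_one) x)
    · rw [indicator_of_mem (hQ.mem_collisions hn hF hG hx h)]
      exact (sampleProb_mem_Icc F hGW x).2
  calc inducedDensity F (graphonOfGraph G)
      = ∫ x, sampleProb F (graphonOfGraph G) x ∂Measure.pi fun _ => unitMeasure :=
        inducedDensity_eq_integral F _
    _ ≤ ∫ x, (collisions m n).indicator 1 x ∂Measure.pi fun _ => unitMeasure :=
        integral_mono_ae (integrable_sampleProb F hGW)
          ((integrable_const 1).indicator (measurableSet_collisions m n)) sampleProb_le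
    _ = (Measure.pi fun _ => unitMeasure).real (collisions m n) :=
        integral_indicator_one (measurableSet_collisions m n)
    _ ≤ (m : ℝ) ^ 2 * (1 / n) := measureReal_collisions_le m n

end Graph

lemma IsHereditary.inducedDensity_eq_zero_of_mem_limitSet {Q : GraphClass} (hQ : IsHereditary Q)
    {W : ℝ → ℝ → ℝ} (hW : W ∈ limitSet Q) {m : ℕ} {F : SimpleGraph (Fin m)} (hF : F ∉ Q m) :
    inducedDensity F W = 0 := by
  obtain ⟨hW, nk, Gk, hGk, hnk, hlim⟩ := hW
  refine le_antisymm ?_ (inducedDensity_nonneg F hW)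
  have bound_tendsto : Tendsto (fun k => (m : ℝ) ^ 2 * (1 / (nk k : ℝ)) +
      (m : ℝ) ^ 2 * deltaCut (graphonOfGraph (Gk k)) W) atTop (nhds 0) := by
    have h : Tendsto (fun k => 1 / (nk k : ℝ)) atTop (nhds 0) :=
      tendsto_const_nhds.div_atTop (tendsto_natCast_atTop_atTop.comp hnk)
    simpa using (h.const_mul ((m : ℝ) ^ 2)).add (hlim.const_mul ((m : ℝ) ^ 2))
  refine ge_of_tendsto bound_tendsto ?_
  filter_upwards [hnk.eventually_gt_atTop 0] with k hk
  have density_le := hQ.inducedDensity_graphonOfGraph_le hk hF (hGk k)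
  have counting :=
    abs_inducedDensity_sub_le_deltaCut F (isGraphon_graphonOfGraph (Gk k)) hW
  linarith [neg_le_of_abs_le counting]

/-! ### Stratified sampling -/

open ProbabilityTheory in
lemma pi_cond {ι : Type*} [Fintype ι] {α : ι → Type*} [∀ i, MeasurableSpace (α i)]
    (μ : ∀ i, Measure (α i)) [∀ i, IsFiniteMeasure (μ i)] {s : ∀ i, Set (α i)}
    (hs : ∀ i, MeasurableSet (s i)) (hs0 : ∀ i, μ i (s i) ≠ 0) :
    Measure.pi (fun i => (μ i)[|s i]) = (Measure.pi μ)[|univ.pi s] := by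
  have (i : ι) : IsProbabilityMeasure (μ i)[|s i] := cond_isProbabilityMeasure (hs0 i)
  refine Measure.pi_eq fun t _ => ?_
  simp only [cond_apply (MeasurableSet.univ_pi hs), cond_apply (hs _), ← pi_inter_distrib,
    Measure.pi_pi, Finset.prod_mul_distrib]
  rw [ENNReal.prod_inv_distrib fun i _ j _ _ => .inl (hs0 i)]

open ProbabilityTheory in
lemma prod_cond {α β : Type*} [MeasurableSpace α] [MeasurableSpace β] (μ : Measure α)
    (ν : Measure β) [IsFiniteMeasure μ] [IsFiniteMeasure ν] (s : Set α) (t : Set β) :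
    (μ[|s]).prod (ν[|t]) = (μ.prod ν)[|s ×ˢ t] := by
  simp only [ProbabilityTheory.cond, Measure.prod_smul_left, Measure.prod_smul_right,
    Measure.prod_restrict, smul_smul, Measure.prod_prod]
  rw [ENNReal.mul_inv (.inr (measure_ne_top _ _)) (.inl (measure_ne_top _ _)), mul_comm]

section Stratified

variable {n : ℕ}

open ProbabilityTheory in
/-- The law of `n` independent points, the `i`-th one uniform on the `i`-th cell. -/
def stratifiedMeasure (n : ℕ) : Measure (Fin n → ℝ) := .pi fun i => unitMeasure[|cell n i]

lemma unitMeasure_cell_ne_zero (i : Fin n) : unitMeasure (cell n i) ≠ 0 := by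
  have hn : (0 : ℝ) < n := Nat.cast_pos.2 i.pos
  rw [unitMeasure_cell]
  exact (ENNReal.ofReal_pos.2 (by positivity)).ne'

instance (i : Fin n) : IsProbabilityMeasure (ProbabilityTheory.cond unitMeasure (cell n i)) :=
  ProbabilityTheory.cond_isProbabilityMeasure (unitMeasure_cell_ne_zero i)

instance : IsProbabilityMeasure (stratifiedMeasure n) := by
  unfold stratifiedMeasure
  infer_instance

open ProbabilityTheory in
lemma stratifiedMeasure_eq_cond :
    stratifiedMeasure n = (Measure.pi fun _ => unitMeasure)[|univ.pi (cell n)] :=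
  pi_cond _ measurableSet_cell unitMeasure_cell_ne_zero

lemma ae_stratifiedMeasure_mem_cell : ∀ᵐ x ∂stratifiedMeasure n, ∀ i, x i ∈ cell n i := by
  rw [stratifiedMeasure_eq_cond]
  filter_upwards [ProbabilityTheory.ae_cond_mem (.univ_pi measurableSet_cell)] with x hx i
  exact hx i (mem_univ i)

lemma stratifiedMeasure_absolutelyContinuous :
    stratifiedMeasure n ≪ Measure.pi fun _ => unitMeasure := by
  rw [stratifiedMeasure_eq_cond]
  exact ProbabilityTheory.cond_absolutelyContinuous

variable {Δ : ℝ × ℝ → ℝ} (hΔ : Integrable Δ (unitMeasure.prod unitMeasure))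
include hΔ

lemma integrable_cond_cell_prod (i j : Fin n) :
    Integrable Δ ((ProbabilityTheory.cond unitMeasure (cell n i)).prod
      (ProbabilityTheory.cond unitMeasure (cell n j))) := by
  rw [prod_cond]
  refine hΔ.integrableOn.smul_measure (ENNReal.inv_ne_top.2 ?_)
  rw [Measure.prod_prod]
  exact mul_ne_zero (unitMeasure_cell_ne_zero i) (unitMeasure_cell_ne_zero j)

lemma integrable_stratifiedMeasure_pair {i j : Fin n} (hij : i ≠ j) :
    Integrable (fun x => Δ (x i, x j)) (stratifiedMeasure n) :=
  (measurePreserving_eval_prod _ hij).integrable_comp_of_integrable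
    (integrable_cond_cell_prod hΔ i j)

lemma integral_stratifiedMeasure_pair {i j : Fin n} (hij : i ≠ j) :
    ∫ x, Δ (x i, x j) ∂stratifiedMeasure n =
      (n : ℝ) ^ 2 * ∫ p in cell n i ×ˢ cell n j, Δ p ∂unitMeasure.prod unitMeasure := by
  have hmp := measurePreserving_eval_prod
    (fun i : Fin n => ProbabilityTheory.cond unitMeasure (cell n i)) hij
  have h := integrable_cond_cell_prod hΔ i j
  rw [← hmp.map_eq] at h
  rw [stratifiedMeasure, ← integral_map (φ := fun x : Fin n → ℝ => (x i, x j)) hmp.aemeasurable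
    h.aestronglyMeasurable, hmp.map_eq, prod_cond, ProbabilityTheory.cond, integral_smul_measure,
    Measure.prod_prod, unitMeasure_cell, unitMeasure_cell, smul_eq_mul, ENNReal.toReal_inv,
    ENNReal.toReal_mul, ENNReal.toReal_ofReal (by positivity), ← sq, ← inv_pow, one_div, inv_inv]

lemma sum_setIntegral_cell_prod_le (hΔ0 : 0 ≤ Δ) (E : Finset (Fin n × Fin n)) :
    ∑ e ∈ E, ∫ p in cell n e.1 ×ˢ cell n e.2, Δ p ∂unitMeasure.prod unitMeasure ≤
      ∫ p, Δ p ∂unitMeasure.prod unitMeasure := by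
  rw [← integral_biUnion_finset E
    (fun e _ => (measurableSet_cell e.1).prod (measurableSet_cell e.2)) ?_
    fun e _ => hΔ.integrableOn]
  · exact setIntegral_le_integral hΔ (ae_of_all _ hΔ0)
  · intro e _ e' _ hne
    refine disjoint_left.2 fun p hp hp' => hne ?_
    exact Prod.ext (eq_of_mem_cell hp.1 hp'.1) (eq_of_mem_cell hp.2 hp'.2)

lemma exists_stratified_sample (hΔ0 : 0 ≤ Δ) {P : (Fin n → ℝ) → Prop}
    (hP : ∀ᵐ x ∂Measure.pi fun _ => unitMeasure, P x) :
    ∃ x : Fin n → ℝ, (∀ i, x i ∈ cell n i) ∧ P x ∧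
      ∑ e ∈ Finset.univ.offDiag, Δ (x e.1, x e.2) ≤
        (n : ℝ) ^ 2 * ∫ p, Δ p ∂unitMeasure.prod unitMeasure := by
  have good : ∀ᵐ x ∂stratifiedMeasure n, (∀ i, x i ∈ cell n i) ∧ P x :=
    ae_stratifiedMeasure_mem_cell.and (stratifiedMeasure_absolutelyContinuous.ae_le hP)
  have pair_integrable : ∀ e ∈ (Finset.univ : Finset (Fin n)).offDiag,
      Integrable (fun x => Δ (x e.1, x e.2)) (stratifiedMeasure n) := fun e he =>
    integrable_stratifiedMeasure_pair hΔ (Finset.mem_offDiag.1 he).2.2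
  obtain ⟨x, hx, sum_le⟩ := exists_notMem_null_le_integral
    (integrable_finsetSum _ pair_integrable) (ae_iff.1 good)
  obtain ⟨mem_cell, hPx⟩ := not_not.1 hx
  refine ⟨x, mem_cell, hPx, sum_le.trans ?_⟩
  rw [integral_finsetSum _ pair_integrable, Finset.sum_congr rfl fun e he =>
    integral_stratifiedMeasure_pair hΔ (Finset.mem_offDiag.1 he).2.2, ← Finset.mul_sum]
  exact mul_le_mul_of_nonneg_left (sum_setIntegral_cell_prod_le hΔ hΔ0 _) (by positivity)

end Stratified

/-! ### Graphs of a class near a graphon -/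

section SampleMatrix

variable {n : ℕ} {W : ℝ → ℝ → ℝ}

/-- The weighted adjacency matrix of the points `x` in the graphon `W`: the edge probabilities of
the `W`-random graph on `x`, which has no loops. -/
def sampleMatrix (W : ℝ → ℝ → ℝ) (x : Fin n → ℝ) (i j : Fin n) : ℝ :=
  if i = j then 0 else W (x i) (x j)

lemma IsGraphon.sampleMatrix_mem_Icc (hW : IsGraphon W) (x : Fin n → ℝ) (i j : Fin n) :
    sampleMatrix W x i j ∈ Icc 0 1 := by
  unfold sampleMatrix
  split_ifs
  exacts [left_mem_Icc.2 zero_le_one, hW.mem_Icc _ _]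

lemma IsGraphon.sampleMatrix_comm (hW : IsGraphon W) (x : Fin n → ℝ) (i j : Fin n) :
    sampleMatrix W x i j = sampleMatrix W x j i := by
  simp only [sampleMatrix, hW.1 (x i), eq_comm]

open Classical in
lemma IsGraphon.exists_graph_cutNorm_stepFun_le (hW : IsGraphon W) (x : Fin n → ℝ) {ε : ℝ}
    (hε : 0 ≤ ε) (hn : 2 / n ≤ ε ^ 4) :
    ∃ G : SimpleGraph (Fin n), sampleProb G W x ≠ 0 ∧
      cutNorm (stepFun fun i j => (if G.Adj i j then 1 else 0) - sampleMatrix W x i j) ≤ ε := by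
  obtain ⟨G, edgeProb_pos, fourCycleSum_le⟩ := exists_graph_fourCycleSum_le
    (hW.sampleMatrix_comm x) (hW.sampleMatrix_mem_Icc x) fun i => if_pos rfl
  refine ⟨G, Finset.prod_ne_zero_iff.2 fun e he => ?_,
    cutNorm_stepFun_le hε (fourCycleSum_le.trans ?_)⟩
  · have hpos := edgeProb_pos e.1 e.2
    rw [sampleMatrix, if_neg (Finset.mem_filter.1 he).2.ne] at hpos
    exact hpos.ne'
  · rw [Fintype.card_fin]
    calc 2 * (n : ℝ) ^ 3 = 2 / n * (n : ℝ) ^ 4 := by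
          rcases eq_or_ne (n : ℝ) 0 with h0 | h0
          · simp [h0]
          · field_simp
      _ ≤ ε ^ 4 * (n : ℝ) ^ 4 := mul_le_mul_of_nonneg_right hn (by positivity)
      _ = (ε * n) ^ 4 := (mul_pow _ _ _).symm

lemma sum_ite_eq_add_sum_offDiag (D : Fin n → Fin n → ℝ) (c : ℝ) :
    ∑ i, ∑ j, (if i = j then c else D i j) =
      n * c + ∑ e ∈ Finset.univ.offDiag, D e.1 e.2 := by
  rw [← Fintype.sum_prod_type', ← Finset.univ_product_univ, ← Finset.diag_union_offDiag,
    Finset.sum_union (Finset.disjoint_diag_offDiag _)]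
  congr 1
  · rw [Finset.sum_diag]
    simp
  · exact Finset.sum_congr rfl fun e he => if_neg (Finset.mem_offDiag.1 he).2.2

section Approximation

variable {U : ℝ × ℝ → ℝ} {x : Fin n → ℝ} {ε : ℝ}

lemma IsGraphon.abs_sampleMatrix_sub_le (hW : IsGraphon W)
    (hU : ∀ p q, dist p q ≤ 1 / n → |U p - U q| ≤ ε) (hx : ∀ i, x i ∈ cell n i) {i j : Fin n}
    {s t : ℝ} (hs : s ∈ cell n i) (ht : t ∈ cell n j) :
    |sampleMatrix W x i j - W s t| ≤
      (if i = j then 1 else |W (x i) (x j) - U (x i, x j)|) + ε + |W s t - U (s, t)| := by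
  have hdist : dist (x i, x j) (s, t) ≤ 1 / n :=
    max_le (abs_sub_le_of_mem_cell (hx i) hs) (abs_sub_le_of_mem_cell (hx j) ht)
  have hUε := hU _ _ hdist
  unfold sampleMatrix
  split_ifs
  · rw [zero_sub, abs_neg, abs_of_nonneg (hW.mem_Icc s t).1]
    linarith [(hW.mem_Icc s t).2, (abs_nonneg _).trans hUε, abs_nonneg (W s t - U (s, t))]
  · calc |W (x i) (x j) - W s t|
        = |(W (x i) (x j) - U (x i, x j)) + (U (x i, x j) - U (s, t)) - (W s t - U (s, t))| := by
          congr 1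
          ring
      _ ≤ |W (x i) (x j) - U (x i, x j)| + |U (x i, x j) - U (s, t)| + |W s t - U (s, t)| :=
          (abs_sub _ _).trans (add_le_add_left (abs_add_le _ _) _)
      _ ≤ _ := by gcongr

lemma IsGraphon.integral_abs_stepFun_sampleMatrix_sub_le (hn : 0 < n) (hW : IsGraphon W)
    (hWU : Integrable (fun p : ℝ × ℝ => W p.1 p.2 - U p) (unitMeasure.prod unitMeasure))
    (hU : ∀ p q, dist p q ≤ 1 / n → |U p - U q| ≤ ε) (hx : ∀ i, x i ∈ cell n i) :
    ∫ p, |stepFun (sampleMatrix W x) p.1 p.2 - W p.1 p.2| ∂unitMeasure.prod unitMeasure ≤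
      (n + ∑ e ∈ Finset.univ.offDiag, |W (x e.1) (x e.2) - U (x e.1, x e.2)|) / n ^ 2 + ε +
        ∫ p, |W p.1 p.2 - U p| ∂unitMeasure.prod unitMeasure := by
  let M (i j : Fin n) : ℝ := if i = j then 1 else |W (x i) (x j) - U (x i, x j)|
  have bound : ∀ᵐ p ∂unitMeasure.prod unitMeasure,
      |stepFun (sampleMatrix W x) p.1 p.2 - W p.1 p.2| ≤
        stepFun M p.1 p.2 + ε + |W p.1 p.2 - U p| := by
    filter_upwards [Measure.quasiMeasurePreserving_fst.ae ae_mem_Ioc_unitMeasure,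
      Measure.quasiMeasurePreserving_snd.ae ae_mem_Ioc_unitMeasure] with p hp₁ hp₂
    obtain ⟨i, hi⟩ := exists_mem_cell hn hp₁
    obtain ⟨j, hj⟩ := exists_mem_cell hn hp₂
    rw [stepFun_apply hi hj, stepFun_apply hi hj]
    exact hW.abs_sampleMatrix_sub_le hU hx hi hj
  have integrable_const_add : Integrable (fun p : ℝ × ℝ => stepFun M p.1 p.2 + ε)
      (unitMeasure.prod unitMeasure) := (integrable_stepFun M).add (integrable_const ε)
  refine (integral_mono_ae ((integrable_stepFun _).sub hW.integrable).abs
    (integrable_const_add.add hWU.abs) bound).trans_eq ?_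
  rw [integral_add' integrable_const_add hWU.abs,
    integral_add (integrable_stepFun M) (integrable_const ε), integral_stepFun,
    sum_ite_eq_add_sum_offDiag, integral_const, probReal_univ, one_smul, mul_one]

end Approximation

end SampleMatrix

section Class

variable {n : ℕ} {W : ℝ → ℝ → ℝ}

lemma IsGraphon.exists_mem_dCut_le_of_approx (hW : IsGraphon W) {𝓕 : Set (SimpleGraph (Fin n))}
    (h𝓕 : ∀ F ∉ 𝓕, inducedDensity F W = 0) (hn : 0 < n) {ε : ℝ} (hε : 0 ≤ ε)
    (hnε : 2 / n ≤ ε ^ 4) {U : ℝ × ℝ → ℝ}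
    (hWU : Integrable (fun p : ℝ × ℝ => W p.1 p.2 - U p) (unitMeasure.prod unitMeasure))
    (hU : ∀ p q, dist p q ≤ 1 / n → |U p - U q| ≤ ε) :
    ∃ G ∈ 𝓕, dCut (graphonOfGraph G) W ≤
      2 * ε + 1 / n + 2 * ∫ p, |W p.1 p.2 - U p| ∂unitMeasure.prod unitMeasure := by
  classical
  have sampleProb_eq_zero : ∀ᵐ x ∂Measure.pi fun _ : Fin n => unitMeasure,
      ∀ F, F ∉ 𝓕 → sampleProb F W x = 0 :=
    ae_all_iff.2 fun F => eventually_imp_distrib_left.2 fun hF =>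
      ae_sampleProb_eq_zero F hW (h𝓕 F hF)
  obtain ⟨x, hx, eq_zero, sum_le⟩ :=
    exists_stratified_sample hWU.abs (fun _ => abs_nonneg _) sampleProb_eq_zero
  obtain ⟨G, hG, rounding_le⟩ := hW.exists_graph_cutNorm_stepFun_le x hε hnε
  refine ⟨G, not_not.1 fun hG𝓕 => hG (eq_zero G hG𝓕), ?_⟩
  have sampling_le := hW.integral_abs_stepFun_sampleMatrix_sub_le hn hWU hU hx
  have hint := (integrable_stepFun (sampleMatrix W x)).sub hW.integrable
  have split : (fun s t => graphonOfGraph G s t - W s t) = fun s t =>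
      stepFun (fun i j => (if G.Adj i j then 1 else 0) - sampleMatrix W x i j) s t +
        (stepFun (sampleMatrix W x) s t - W s t) := by
    funext s t
    rw [stepFun_sub, graphonOfGraph_eq_stepFun]
    ring
  set I := ∫ p, |W p.1 p.2 - U p| ∂unitMeasure.prod unitMeasure
  calc dCut (graphonOfGraph G) W
      ≤ ε + ∫ p, |stepFun (sampleMatrix W x) p.1 p.2 - W p.1 p.2|
          ∂unitMeasure.prod unitMeasure := by
        rw [dCut, split]
        exact (cutNorm_add_le (integrable_stepFun _)
          (V := fun s t => stepFun (sampleMatrix W x) s t - W s t) hint).trans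
          (add_le_add rounding_le (cutNorm_le_integral_abs hint))
    _ ≤ ε + ((n + n ^ 2 * I) / n ^ 2 + ε + I) := by
        refine add_le_add_right (sampling_le.trans ?_) _
        gcongr
    _ = 2 * ε + 1 / n + 2 * I := by
        field_simp
        ring

lemma IsGraphon.eventually_exists_mem_dCut_le (hW : IsGraphon W) {ε : ℝ} (hε : 0 < ε) :
    ∀ᶠ n : ℕ in atTop, ∀ 𝓕 : Set (SimpleGraph (Fin n)), (∀ F ∉ 𝓕, inducedDensity F W = 0) →
      ∃ G ∈ 𝓕, dCut (graphonOfGraph G) W ≤ ε := by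
  obtain ⟨U, compact_support, approx, continuous, integrable⟩ :=
    hW.integrable.exists_hasCompactSupport_integral_sub_le (show 0 < ε / 5 by positivity)
  obtain ⟨δ, hδ, uniform⟩ := Metric.uniformContinuous_iff.1
    (compact_support.uniformContinuous_of_continuous continuous) (ε / 5) (by positivity)
  have tendsto_div (c : ℝ) := tendsto_const_div_atTop_nhds_zero_nat c
  filter_upwards [eventually_gt_atTop 0,
    (tendsto_div 2).eventually_le_const (show 0 < (ε / 5) ^ 4 by positivity),
    (tendsto_div 1).eventually_lt_const hδ,
    (tendsto_div 1).eventually_le_const (show 0 < ε / 5 by positivity)]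
    with n hn two_div_le one_div_lt one_div_le 𝓕 h𝓕
  obtain ⟨G, hG, dCut_le⟩ := hW.exists_mem_dCut_le_of_approx h𝓕 hn (by positivity) two_div_le
    (hW.integrable.sub integrable) fun p q hpq => (uniform (hpq.trans_lt one_div_lt)).le
  exact ⟨G, hG, dCut_le.trans (by simp only [← Real.norm_eq_abs]; linarith)⟩

end Class

lemma mem_limitSet_of_inducedDensity_eq_zero {Q : GraphClass} {W : ℝ → ℝ → ℝ} (hW : IsGraphon W)
    (h : ∀ m, 1 ≤ m → ∀ F : SimpleGraph (Fin m), F ∉ Q m → inducedDensity F W = 0) :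
    W ∈ limitSet Q := by
  have exists_near (k : ℕ) : ∃ n ≥ k, ∃ G ∈ Q n,
      dCut (graphonOfGraph G) W ≤ 1 / ((k : ℝ) + 1) := by
    have near_eventually := hW.eventually_exists_mem_dCut_le (Nat.one_div_pos_of_nat (n := k))
    obtain ⟨n, near, hkn⟩ := (near_eventually.and (eventually_ge_atTop (max k 1))).exists
    exact ⟨n, (le_max_left _ _).trans hkn, near (Q n) (h n ((le_max_right _ _).trans hkn))⟩
  choose n hkn G hG dCut_le using exists_near
  exact ⟨hW, n, G, hG, tendsto_atTop_mono hkn tendsto_id, squeeze_zero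
    (fun _ => deltaCut_nonneg _ _) (fun k => (deltaCut_le_dCut _ _).trans (dCut_le k))
    tendsto_one_div_add_atTop_nhds_zero_nat⟩

/-- Lemma 3.2: for a hereditary class `Q` and a graphon `W`,
`W ∈ Q̂` iff `p(F; W) = 0` for every graph `F` not in `Q`. -/
theorem stmt0 (Q : GraphClass) (hQ : IsHereditary Q)
    (W : ℝ → ℝ → ℝ) (hW : IsGraphon W) :
    W ∈ limitSet Q ↔
      ∀ m : ℕ, 1 ≤ m → ∀ F : SimpleGraph (Fin m), F ∉ Q m → inducedDensity F W = 0 :=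
  ⟨fun h _ _ _ hF => hQ.inducedDensity_eq_zero_of_mem_limitSet h hF,
    mem_limitSet_of_inducedDensity_eq_zero hW⟩

end
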